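/- Let G be a finite graph (with a loop at every vertex) having no universal vertices and no true twins. Then G is a circular-arc graph if and only if a circular completion of G contains no anchored invertible pair. -/

import Mathlib

/-!
Let `H` be a circular completion of `G`. Minimality of `H` forbids true twins in `H` and makes
every vertex outside `G` the partner of a vertex of `G`. So the partner in a circular pair is
unique: it is an order-reversing involution `bar` of the set of vertices ordered by
`a ≤ b ↔ N[a] ⊆ N[b]`, with `a ≰ bar a`, and `a`, `b` are adjacent iff `a ≰ bar b`. Everything is
phrased in this structure (`Pocset`). In an arc model `≤` is containment, `bar` is complementation,
`a ≤ bar b` is disjointness and `bar a ≤ b` says that two arcs cover the circle.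

From right to left (`circularArc_of_no_anchored`). Incomparable pairs `(x, y)` are linked by moves:
`x` moves to an adjacent `x'` avoided by `y`, and such a move must not change the order in which
the left endpoints of `x` and `y` occur. If no class of pairs contains both `(x, y)` and `(y, x)`,
all classes can be oriented (`exists_orientation`), each according to its least member for a fixed
enumeration of the vertices. Take `z` minimal for `≤`. The absence of pairs invertible with respect
to `z` gives an orientation of the pairs of vertices incomparable to `z`, and from it a set `X`
with one member of every circular pair, no two of whose members cover the circle: the arcs missing
a point of `z` (`stage_one`). The members of `X` are to become intervals of a line; their pairs
have no inversion without any anchor, and reorienting them by least members gives an orientation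
without cyclic triangles (`stage_two`), since a cyclic triangle can be moved to a smaller one
(`no_cyclic_triangle`). This orientation together with `≤` determines a linear order of all
endpoints (`exists_lam`), which is a circular-arc model of `H`, hence of `G`.

From left to right (`no_anchored_of_circularArc`). Among all models of `G` by arcs on the endpoints
of a given one, a maximal model has `S u ⊆ S v` whenever `N[u] ⊆ N[v]`, and covers the circle with
the ends of every 2-overlap edge (`exists_good_model`). Complements of arcs extend it to the
partners, hence to `H`. In the resulting model the cyclic orientation of the left endpoints of
`x`, `y`, `z` is unchanged when `x` runs through an edge avoided by `y` and `z` (`cyc_move`), so it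
is constant along a pair of walks that avoid each other and `z`. Such walks cannot exchange `x`
and `y`, which would reverse it.
-/

/-!
Graphs here are finite, undirected, without parallel edges, and have a loop at
every vertex.  We model them as symmetric reflexive relations.
-/

structure LoopGraph (V : Type) where
  Adj : V → V → Prop
  symm : ∀ u v, Adj u v → Adj v u
  refl : ∀ u, Adj u u

namespace LoopGraph

variable {V W : Type}

/-- Closed neighbourhood `N[u]`. -/
def nbhd (G : LoopGraph V) (u : V) : Set V := {v | G.Adj u v}

/-- `u` is a universal vertex. -/
def Universal (G : LoopGraph V) (u : V) : Prop := ∀ v, G.Adj u v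

/-- `u ≠ v` are true twins if `N[u] = N[v]`. -/
def TrueTwins (G : LoopGraph V) (u v : V) : Prop := u ≠ v ∧ G.nbhd u = G.nbhd v

/-- `uv` is an inclusion edge: it is an edge and `N[u] ⊆ N[v]` or `N[v] ⊆ N[u]`. -/
def InclusionEdge (G : LoopGraph V) (u v : V) : Prop :=
  G.Adj u v ∧ (G.nbhd u ⊆ G.nbhd v ∨ G.nbhd v ⊆ G.nbhd u)

/-- `u` overlaps `v`: they are adjacent and their closed neighbourhoods are incomparable. -/
def Overlaps (G : LoopGraph V) (u v : V) : Prop :=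
  G.Adj u v ∧ ¬ G.nbhd u ⊆ G.nbhd v ∧ ¬ G.nbhd v ⊆ G.nbhd u

/-- `{u,v}` is a spanning pair. -/
def SpanningPair (G : LoopGraph V) (u v : V) : Prop :=
  (∀ x, ¬ G.Adj v x → G.nbhd x ⊆ G.nbhd u) ∧
  (∀ y, ¬ G.Adj u y → G.nbhd y ⊆ G.nbhd v)

/-- `uv` is a 2-overlap edge: an overlap edge forming a spanning pair. -/
def TwoOverlapEdge (G : LoopGraph V) (u v : V) : Prop :=
  G.Overlaps u v ∧ G.SpanningPair u v

/-- `uv` is a 1-overlap edge: an overlap edge not forming a spanning pair. -/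
def OneOverlapEdge (G : LoopGraph V) (u v : V) : Prop :=
  G.Overlaps u v ∧ ¬ G.SpanningPair u v

/-- `{u,v}` is a circular pair: a non-adjacent spanning pair. -/
def CircularPair (G : LoopGraph V) (u v : V) : Prop :=
  G.SpanningPair u v ∧ ¬ G.Adj u v

/-- Every vertex belongs to some circular pair. -/
def CircularlyPaired (G : LoopGraph V) : Prop := ∀ u, ∃ v, G.CircularPair u v

/-- A walk with `k` edges: vertices `P 0, …, P k` with consecutive vertices adjacent. -/
def IsWalk (G : LoopGraph V) (k : ℕ) (P : ℕ → V) : Prop :=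
  ∀ i < k, G.Adj (P i) (P (i + 1))

/-- Vertex `z` avoids the edge `ab`: every neighbour of `z` among `a, b` overlaps `z`,
and if `z` overlaps both `a` and `b` then `a, b` do not overlap each other. -/
def AvoidsEdge (G : LoopGraph V) (z a b : V) : Prop :=
  (G.Adj z a → G.Overlaps z a) ∧ (G.Adj z b → G.Overlaps z b) ∧
  (G.Overlaps z a → G.Overlaps z b → ¬ G.Overlaps a b)

/-- Vertex `z` and the walk `P` (with `k` edges) avoid each other. -/
def AvoidsWalk (G : LoopGraph V) (z : V) (k : ℕ) (P : ℕ → V) : Prop :=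
  (∀ i ≤ k, G.Adj z (P i) → G.Overlaps z (P i)) ∧
  (∀ i < k, G.Overlaps z (P i) → G.Overlaps z (P (i + 1)) →
    ¬ G.Overlaps (P i) (P (i + 1)))

/-- The walks `P` and `Q` (both with `k` edges) avoid each other. -/
def WalksAvoid (G : LoopGraph V) (k : ℕ) (P Q : ℕ → V) : Prop :=
  ∀ i < k, G.AvoidsEdge (P i) (Q i) (Q (i + 1)) ∧ G.AvoidsEdge (Q (i + 1)) (P i) (P (i + 1))

/-- `{x,y}` is a `z`-invertible pair, i.e. an invertible pair anchored at `z`. -/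
def ZInvertiblePair (G : LoopGraph V) (z x y : V) : Prop :=
  x ≠ y ∧ x ≠ z ∧ y ≠ z ∧
  ∃ k, ∃ P Q : ℕ → V, G.IsWalk k P ∧ G.IsWalk k Q ∧
    P 0 = x ∧ P k = y ∧ Q 0 = y ∧ Q k = x ∧
    G.WalksAvoid k P Q ∧ G.AvoidsWalk z k P ∧ G.AvoidsWalk z k Q

/-- `G` contains an anchored invertible pair. -/
def HasAnchoredInvertiblePair (G : LoopGraph V) : Prop :=
  ∃ z x y, G.ZInvertiblePair z x y

end LoopGraph

/-!
Circular arcs: the circle is modelled as the half-open interval `[0,1)`;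
an arc is described by its left and right endpoints (clockwise = increasing),
wrapping around if necessary.
-/

/-- Membership of the point `t` in the clockwise arc from `l` to `r`. -/
def arcMem (l r t : ℝ) : Prop :=
  (l ≤ r ∧ l ≤ t ∧ t ≤ r) ∨ (r < l ∧ (l ≤ t ∨ t ≤ r))

/-- The arc `[l₁,r₁]` is contained in the arc `[l₂,r₂]`. -/
def arcSubset (l₁ r₁ l₂ r₂ : ℝ) : Prop :=
  ∀ t ∈ Set.Ico (0 : ℝ) 1, arcMem l₁ r₁ t → arcMem l₂ r₂ t

/-- The arc `[lu,ru]` properly contains the arc `[lv,rv]`. -/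
def arcProperContains (lu ru lv rv : ℝ) : Prop :=
  arcSubset lv rv lu ru ∧ ¬ arcSubset lu ru lv rv

/-- The arcs `[lu,ru]` and `[lv,rv]` together cover the whole circle. -/
def arcsCover (lu ru lv rv : ℝ) : Prop :=
  ∀ t ∈ Set.Ico (0 : ℝ) 1, arcMem lu ru t ∨ arcMem lv rv t

/-- `b` lies strictly between `a` and `c` in the clockwise cyclic order on `[0,1)`. -/
def cycBtw (a b c : ℝ) : Prop :=
  (a < b ∧ b < c) ∨ (b < c ∧ c < a) ∨ (c < a ∧ a < b)

/-- The four points `a, b, c, d` of `[0,1)` occur in this clockwise cyclic order. -/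
def cyc4 (a b c d : ℝ) : Prop := cycBtw a b c ∧ cycBtw a c d

namespace LoopGraph

variable {V W : Type}

/-- `(l, r)` is a circular-arc representation of `G`: all endpoints are distinct and
two vertices are adjacent iff their arcs intersect. -/
def IsCARep (G : LoopGraph V) (l r : V → ℝ) : Prop :=
  (∀ v, l v ∈ Set.Ico (0 : ℝ) 1) ∧ (∀ v, r v ∈ Set.Ico (0 : ℝ) 1) ∧
  Function.Injective (Sum.elim l r) ∧
  ∀ u v, (G.Adj u v ↔ ∃ t ∈ Set.Ico (0 : ℝ) 1,
    arcMem (l u) (r u) t ∧ arcMem (l v) (r v) t)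

/-- `G` is a circular-arc graph. -/
def IsCircularArc (G : LoopGraph V) : Prop := ∃ l r : V → ℝ, G.IsCARep l r

/-- A normalized circular-arc representation of `G`. -/
def IsNormalizedRep (G : LoopGraph V) (l r : V → ℝ) : Prop :=
  G.IsCARep l r ∧
  ∀ u v, G.Adj u v → u ≠ v →
    (arcProperContains (l u) (r u) (l v) (r v) ↔ G.nbhd v ⊆ G.nbhd u) ∧
    (arcsCover (l u) (r u) (l v) (r v) ↔ G.TwoOverlapEdge u v)

/-- A circular-arc representation of the induced subgraph `G[X]` which is
normalized with respect to `G`. -/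
def IsNormalizedRepOn (G : LoopGraph V) (X : Set V) (l r : V → ℝ) : Prop :=
  (∀ v ∈ X, l v ∈ Set.Ico (0 : ℝ) 1) ∧ (∀ v ∈ X, r v ∈ Set.Ico (0 : ℝ) 1) ∧
  Set.InjOn l X ∧ Set.InjOn r X ∧ (∀ u ∈ X, ∀ v ∈ X, l u ≠ r v) ∧
  (∀ u ∈ X, ∀ v ∈ X,
    (G.Adj u v ↔ ∃ t ∈ Set.Ico (0 : ℝ) 1,
      arcMem (l u) (r u) t ∧ arcMem (l v) (r v) t)) ∧
  (∀ u ∈ X, ∀ v ∈ X, G.Adj u v → u ≠ v →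
    (arcProperContains (l u) (r u) (l v) (r v) ↔ G.nbhd v ⊆ G.nbhd u) ∧
    (arcsCover (l u) (r u) (l v) (r v) ↔ G.TwoOverlapEdge u v))

/-! Circular completions. -/

/-- `f` exhibits `G` as an induced subgraph of `H`. -/
def InducedEmb (G : LoopGraph V) (H : LoopGraph W) (f : V → W) : Prop :=
  Function.Injective f ∧ ∀ u v, (G.Adj u v ↔ H.Adj (f u) (f v))

/-- Every edge of `G` has the same type (inclusion / 1-overlap / 2-overlap)
in `G` and in `H`. -/
def SameEdgeTypes (G : LoopGraph V) (H : LoopGraph W) (f : V → W) : Prop :=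
  ∀ u v, G.Adj u v →
    ((G.InclusionEdge u v ↔ H.InclusionEdge (f u) (f v)) ∧
     (G.OneOverlapEdge u v ↔ H.OneOverlapEdge (f u) (f v)) ∧
     (G.TwoOverlapEdge u v ↔ H.TwoOverlapEdge (f u) (f v)))

/-- `H` (with embedding `f`) is a circular completion of `G`: a circularly-paired
graph with the fewest possible vertices containing `G` as an induced subgraph with
all edge types preserved. -/
def IsCircularCompletion (G : LoopGraph V) (H : LoopGraph W) (f : V → W) : Prop :=
  Finite W ∧ G.InducedEmb H f ∧ G.SameEdgeTypes H f ∧ H.CircularlyPaired ∧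
  ∀ (W' : Type) (H' : LoopGraph W') (f' : V → W'), Finite W' →
    G.InducedEmb H' f' → G.SameEdgeTypes H' f' → H'.CircularlyPaired →
    Nat.card W ≤ Nat.card W'

/-! The anchored Δ-knotting graph. -/

/-- `A(z)`: vertices nonadjacent to `z` or overlapping `z`. -/
def Aset (G : LoopGraph V) (z : V) : Set V := {u | ¬ G.Adj z u ∨ G.Overlaps z u}

/-- `x` and `y` are `uz`-connected. -/
def UZConnected (G : LoopGraph V) (u z x y : V) : Prop :=
  ¬ G.InclusionEdge x u ∧ ¬ G.InclusionEdge y u ∧ ¬ G.InclusionEdge x z ∧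
  ¬ G.InclusionEdge y z ∧ ¬ G.InclusionEdge u z ∧
  ∃ k, ∃ P : ℕ → V, G.IsWalk k P ∧ P 0 = x ∧ P k = y ∧
    G.AvoidsWalk u k P ∧ G.AvoidsWalk z k P

/-- `X` is a `uz`-component: a maximal set of pairwise `uz`-connected vertices. -/
def IsUZComponent (G : LoopGraph V) (u z : V) (X : Set V) : Prop :=
  X.Nonempty ∧ (∀ x ∈ X, ∀ y ∈ X, G.UZConnected u z x y) ∧
  ∀ Y : Set V, X ⊆ Y → (∀ x ∈ Y, ∀ y ∈ Y, G.UZConnected u z x y) → Y = X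

/-- Vertices of the `z`-anchored Δ-knotting graph: copies `(u, X)` of `u ∈ A(z)`,
one for each `uz`-component `X`. -/
def KnotVertex (G : LoopGraph V) (z : V) (p : V × Set V) : Prop :=
  p.1 ∈ G.Aset z ∧ G.IsUZComponent p.1 z p.2

/-- Edges of the `z`-anchored Δ-knotting graph: for each edge `uv` of `G` with
`u, v ∈ A(z)`, an edge between the copy of `u` for `X` and the copy of `v` for `Y`
whenever `v ∈ X` and `u ∈ Y`. -/
def KnotAdj (G : LoopGraph V) (z : V) (p q : V × Set V) : Prop :=
  G.Adj p.1 q.1 ∧ p.1 ∈ G.Aset z ∧ q.1 ∈ G.Aset z ∧ q.1 ∈ p.2 ∧ p.1 ∈ q.2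

/-- The `z`-anchored Δ-knotting graph of `G` is bipartite (it is 2-colourable). -/
def KnotBipartite (G : LoopGraph V) (z : V) : Prop :=
  ∃ c : V × Set V → Bool, ∀ p q, G.KnotVertex z p → G.KnotVertex z q →
    G.KnotAdj z p q → c p ≠ c q

/-! Non-inverting sets. -/

/-- `X` is a non-inverting set of `G`. -/
def NonInvertingSet (G : LoopGraph V) (X : Set V) : Prop :=
  (∀ u ∈ X, ∀ v ∈ X, ¬ G.TwoOverlapEdge u v) ∧
  ¬ ∃ x ∈ X, ∃ y ∈ X, ∃ k, 0 < k ∧ ∃ P Q : ℕ → V,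
      G.IsWalk k P ∧ G.IsWalk k Q ∧ (∀ i ≤ k, P i ∈ X) ∧ (∀ i ≤ k, Q i ∈ X) ∧
      P 0 = x ∧ P k = y ∧ Q 0 = y ∧ Q k = x ∧ G.WalksAvoid k P Q

end LoopGraph

/-!
Edge-labelled graphs: graphs (with loops) in which every edge is labelled
inclusion or overlap, loops being labelled inclusion.
-/

structure ELGraph (V : Type) where
  Adj : V → V → Prop
  symm : ∀ u v, Adj u v → Adj v u
  refl : ∀ u, Adj u u
  /-- `Ovl u v` means the edge `uv` is labelled as an overlap edge. -/
  Ovl : V → V → Prop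
  ovl_symm : ∀ u v, Ovl u v → Ovl v u
  ovl_adj : ∀ u v, Ovl u v → Adj u v
  ovl_irrefl : ∀ u, ¬ Ovl u u

namespace ELGraph

variable {V : Type}

/-- Closed neighbourhood `N[u]`. -/
def nbhd (G : ELGraph V) (u : V) : Set V := {v | G.Adj u v}

/-- `uv` is (labelled as) an inclusion edge. -/
def InclEdge (G : ELGraph V) (u v : V) : Prop := G.Adj u v ∧ ¬ G.Ovl u v

/-- A walk with `k` edges. -/
def IsWalk (G : ELGraph V) (k : ℕ) (P : ℕ → V) : Prop :=
  ∀ i < k, G.Adj (P i) (P (i + 1))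

/-- `z` avoids the edge `ab`: every neighbour of `z` among `a, b` overlaps `z`, and if
`z` overlaps both `a` and `b` then the edge `ab` is an inclusion edge. -/
def AvoidsEdge (G : ELGraph V) (z a b : V) : Prop :=
  (G.Adj z a → G.Ovl z a) ∧ (G.Adj z b → G.Ovl z b) ∧
  (G.Ovl z a → G.Ovl z b → ¬ G.Ovl a b)

/-- The walks `P` and `Q` (both with `k` edges) avoid each other. -/
def WalksAvoid (G : ELGraph V) (k : ℕ) (P Q : ℕ → V) : Prop :=
  ∀ i < k, G.AvoidsEdge (P i) (Q i) (Q (i + 1)) ∧ G.AvoidsEdge (Q (i + 1)) (P i) (P (i + 1))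

/-- The ordered pair `p` is related to the ordered pair `q`: there exist a walk from
`p.1` to `q.1` and a walk from `p.2` to `q.2`, of the same (positive) length, that
avoid each other. -/
def Related (G : ELGraph V) (p q : V × V) : Prop :=
  ∃ k, 0 < k ∧ ∃ P Q : ℕ → V, G.IsWalk k P ∧ G.IsWalk k Q ∧
    P 0 = p.1 ∧ Q 0 = p.2 ∧ P k = q.1 ∧ Q k = q.2 ∧ G.WalksAvoid k P Q

/-- A Δ-implication class: a maximal set of pairwise related ordered pairs. -/
def IsDeltaClass (G : ELGraph V) (A : Set (V × V)) : Prop :=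
  A.Nonempty ∧ (∀ p ∈ A, ∀ q ∈ A, G.Related p q) ∧
  ∀ B : Set (V × V), A ⊆ B → (∀ p ∈ B, ∀ q ∈ B, G.Related p q) → B = A

/-- `A⁻¹ = {(u,v) : (v,u) ∈ A}`. -/
def inv (A : Set (V × V)) : Set (V × V) := {p | p.swap ∈ A}

/-- `span A`: the set of vertices incident to pairs of `A`. -/
def span (A : Set (V × V)) : Set V := {v | ∃ p ∈ A, v = p.1 ∨ v = p.2}

/-- `S` induces a clique. -/
def IsClique (G : ELGraph V) (S : Set V) : Prop := ∀ a ∈ S, ∀ b ∈ S, G.Adj a b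

/-- A Δ-module. -/
def IsDeltaModule (G : ELGraph V) (S : Set V) : Prop :=
  S.Nonempty ∧
  (∀ x, x ∉ S →
    ((∀ s ∈ S, ¬ G.Adj x s) ∨ (∀ s ∈ S, G.InclEdge x s) ∨ (∀ s ∈ S, G.Ovl x s))) ∧
  (¬ G.IsClique S → ∀ x, x ∉ S → ∀ s ∈ S, ¬ G.Ovl x s)

/-- A trivial Δ-module: the whole vertex set or a single vertex. -/
def TrivialModule (S : Set V) : Prop := S = Set.univ ∨ ∃ a : V, S = {a}

/-- `{a,b}` is a Δ-invertible pair: `(a,b)` is related to `(b,a)`. -/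
def DeltaInvertiblePair (G : ELGraph V) (a b : V) : Prop := G.Related (a, b) (b, a)

/-- An interval ordering of an edge-labelled graph. -/
def IsIntervalOrdering (G : ELGraph V) (lt : V → V → Prop) : Prop :=
  IsStrictTotalOrder V lt ∧
  ¬ ∃ a b c, lt a b ∧ lt b c ∧
    ((¬ G.Adj a b ∧ G.Adj a c) ∨
     (G.InclEdge a b ∧ ¬ G.Adj a c ∧ G.Adj b c) ∨
     (G.Ovl a b ∧ G.Adj a c ∧ ¬ G.Adj b c) ∨
     (G.Ovl a b ∧ G.Ovl b c ∧ G.InclEdge a c) ∨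
     (G.InclEdge a b ∧ G.InclEdge b c ∧ G.Ovl a c))

/-- An interval representation of `G` consistent with its labelling. -/
def IsConsistentIntervalRep (G : ELGraph V) (l r : V → ℝ) : Prop :=
  (∀ v, l v ≤ r v) ∧
  (∀ u v, (G.Adj u v ↔ (Set.Icc (l u) (r u) ∩ Set.Icc (l v) (r v)).Nonempty)) ∧
  (∀ u v, (G.Ovl u v ↔
    ((Set.Icc (l u) (r u) ∩ Set.Icc (l v) (r v)).Nonempty ∧
     ¬ Set.Icc (l u) (r u) ⊆ Set.Icc (l v) (r v) ∧
     ¬ Set.Icc (l v) (r v) ⊆ Set.Icc (l u) (r u))))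

/-- A consistently edge-labelled graph: there is a transitive orientation `D` of its
inclusion edges (between distinct vertices) such that `D u v → N[v] ⊆ N[u]`. -/
def ConsistentlyLabelled (G : ELGraph V) : Prop :=
  ∃ D : V → V → Prop,
    (∀ u v, D u v → u ≠ v ∧ G.InclEdge u v) ∧
    (∀ u v, u ≠ v → G.InclEdge u v → (D u v ↔ ¬ D v u)) ∧
    (∀ u v w, D u v → D v w → D u w) ∧
    (∀ u v, D u v → G.nbhd v ⊆ G.nbhd u)

end ELGraph



/-! ### Orientations of pairs along moves -/

/-- One move of an ordered pair. `Mv y x x'` says that `x` may be replaced by `x'` in a pair whose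
other member is `y`, on either side. -/
inductive PairStep {W : Type} (Mv : W → W → W → Prop) : W × W → W × W → Prop
  | left {x x' y} : Mv y x x' → PairStep Mv (x, y) (x', y)
  | right {x y y'} : Mv x y y' → PairStep Mv (x, y) (x, y')

theorem PairStep.swap {W : Type} {Mv : W → W → W → Prop} {p q : W × W}
    (h : PairStep Mv p q) : PairStep Mv p.swap q.swap := by
  cases h with
  | left h => exact .right h
  | right h => exact .left h

theorem PairStep.symm {W : Type} {Mv : W → W → W → Prop}
    (hs : ∀ y x x', Mv y x x' → Mv y x' x) {p q : W × W}
    (h : PairStep Mv p q) : PairStep Mv q p := by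
  cases h with
  | left h => exact .left (hs _ _ _ h)
  | right h => exact .right (hs _ _ _ h)

open Relation in
/-- If no class of pairs (for the moves `Mv`) contains a pair and its reverse, the pairs in `F` have
an orientation `D` invariant under moves. Each class is oriented by its member `(s, t)` or `(t, s)`
with lexicographically least index set, so that `D s t` holds when `s` is the one of smaller index.
The last clause records this: a pair oriented against the enumeration has a smaller pair in its
class. -/
theorem exists_orientation {W : Type} (Mv : W → W → W → Prop) (F : W → W → Prop)
    (idx : W → ℕ) (hidx : Function.Injective idx)
    (hs : ∀ y x x', Mv y x x' → Mv y x' x)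
    (hFs : ∀ x y, F x y → F y x) (hFi : ∀ x, ¬ F x x)
    (hMF : ∀ y x x', Mv y x x' → F x' y)
    (hinv : ∀ x y, F x y → ¬ ReflTransGen (PairStep Mv) (x, y) (y, x)) :
    ∃ D : W → W → Prop,
      (∀ y x x', Mv y x x' → D x y → D x' y) ∧
      (∀ x y, F x y → (D x y ↔ ¬ D y x)) ∧
      (∀ x y, F x y → D x y → idx y < idx x →
        ∃ s t, ReflTransGen (PairStep Mv) (x, y) (s, t) ∧
          (idx s < idx y ∨ s = y ∧ idx t < idx x)) := by
  classical
  set R := ReflTransGen (PairStep Mv) with hR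
  have Rsymm : ∀ p q, R p q → R q p := by
    intro p q h
    induction h with
    | refl => exact .refl
    | tail _ h ih => exact (ReflTransGen.single (h.symm hs)).trans ih
  have Rswap : ∀ p q, R p q → R p.swap q.swap := by
    intro p q h
    induction h with
    | refl => exact .refl
    | tail _ h ih => exact ih.tail h.swap
  have Rtrans : ∀ p q r, R p q → R q r → R p r := fun p q r h h' => ReflTransGen.trans h h'
  have RF : ∀ p q, R p q → F p.1 p.2 → F q.1 q.2 := by
    intro p q h hp
    induction h with
    | refl => exact hp
    | tail _ h ih =>
      cases h with
      | left h => exact hMF _ _ _ h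
      | right h => exact hFs _ _ (hMF _ _ _ h)
  let key : W × W → ℕ ×ₗ ℕ := fun p =>
    toLex (min (idx p.1) (idx p.2), max (idx p.1) (idx p.2))
  let D : W → W → Prop := fun x y => ∃ p : W × W, R (x, y) p ∧ idx p.1 < idx p.2 ∧
    ∀ q : W × W, R (x, y) q ∨ R (y, x) q → key p ≤ key q
  have keyinj : ∀ p q : W × W, idx p.1 < idx p.2 → idx q.1 < idx q.2 → key p = key q → p = q := by
    intro p q hp hq h
    have h' := congrArg ofLex h
    simp only [key, ofLex_toLex, Prod.mk.injEq] at h'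
    exact Prod.ext (hidx (by omega)) (hidx (by omega))
  refine ⟨D, ?_, ?_, ?_⟩
  · rintro y x x' h ⟨p, h1, h2, h3⟩
    have hst : R (x, y) (x', y) := ReflTransGen.single (.left h)
    have hst' : R (y, x) (y, x') := ReflTransGen.single (.right h)
    refine ⟨p, Rtrans _ _ _ (Rsymm _ _ hst) h1, h2, fun q hq => h3 q ?_⟩
    exact hq.imp (Rtrans _ _ _ hst) (Rtrans _ _ _ hst')
  · intro x y hF
    constructor
    · rintro ⟨p, h1, h2, h3⟩ ⟨q, h4, h5, h6⟩
      have : key p = key q := le_antisymm (h3 q (Or.inr h4)) (h6 p (Or.inr h1))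
      have := keyinj p q h2 h5 this
      subst this
      exact hinv x y hF (Rtrans _ _ _ h1 (Rsymm _ _ h4))
    · intro hn
      obtain ⟨p, hp, hmin⟩ := WellFounded.has_min
        (InvImage.wf key (wellFounded_lt (α := ℕ ×ₗ ℕ))) {q | R (x, y) q ∨ R (y, x) q}
        ⟨(x, y), Or.inl ReflTransGen.refl⟩
      have hmin' : ∀ q, R (x, y) q ∨ R (y, x) q → key p ≤ key q := fun q hq =>
        not_lt.1 (hmin q hq)
      have hkswap : key p.swap = key p := by
        simp only [key, Prod.fst_swap, Prod.snd_swap, min_comm, max_comm]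
      have hpF : F p.1 p.2 := hp.elim (fun h => RF _ _ h hF) (fun h => RF _ _ h (hFs _ _ hF))
      have hne : idx p.1 ≠ idx p.2 := fun h => hFi p.1 (by
        have := hidx h; rw [← this] at hpF; exact hpF)
      rcases lt_or_gt_of_ne hne with hlt | hlt
      · rcases hp with hp | hp
        · exact ⟨p, hp, hlt, hmin'⟩
        · exact absurd ⟨p, hp, hlt, fun q hq => hmin' q hq.symm⟩ hn
      · rcases hp with hp | hp
        · exact absurd ⟨p.swap, Rswap _ _ hp, hlt, fun q hq => hkswap ▸ hmin' q hq.symm⟩ hn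
        · exact ⟨p.swap, Rswap _ _ hp, hlt, fun q hq => hkswap ▸ hmin' q hq⟩
  · rintro x y hF ⟨⟨s, t⟩, h1, h2, h3⟩ hlt
    refine ⟨s, t, h1, ?_⟩
    have h := h3 (x, y) (Or.inl ReflTransGen.refl)
    simp only [key, Prod.Lex.toLex_le_toLex] at h
    simp only at h2
    rcases h with h | ⟨h, h'⟩
    · left; omega
    · have e1 : s = y := hidx (by omega)
      refine Or.inr ⟨e1, lt_of_le_of_ne (by omega) fun he => ?_⟩
      have e2 : t = x := hidx he
      subst e1 e2
      exact hinv _ _ hF h1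

open Relation in
/-- An orientation whose backward pairs come from smaller pairs has no cyclic triangle, provided
that a cyclic triangle stays one when one of its sides is moved. Some side at the vertex of least
index is oriented backwards, and moving it to its smaller pair decreases the triangle. -/
theorem no_cyclic_triangle {W : Type} (Mv : W → W → W → Prop) (F : W → W → Prop)
    (idx : W → ℕ) (hidx : Function.Injective idx)
    (hFi : ∀ x, ¬ F x x)
    (D : W → W → Prop) (hDF : ∀ x y, D x y → F x y)
    (hseed : ∀ x y, F x y → D x y → idx y < idx x →
        ∃ s t, ReflTransGen (PairStep Mv) (x, y) (s, t) ∧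
          (idx s < idx y ∨ s = y ∧ idx t < idx x))
    (htri : ∀ a p q, PairStep Mv p q → D a p.1 → D p.1 p.2 → D p.2 a →
      D a q.1 ∧ D q.1 q.2 ∧ D q.2 a) :
    ∀ a b c, D a b → D b c → D c a → False := by
  have htri' : ∀ a p q, ReflTransGen (PairStep Mv) p q → D a p.1 → D p.1 p.2 → D p.2 a →
      D a q.1 ∧ D q.1 q.2 ∧ D q.2 a := by
    intro a p q h h1 h2 h3
    induction h with
    | refl => exact ⟨h1, h2, h3⟩
    | tail _ h ih => exact htri a _ _ h ih.1 ih.2.1 ih.2.2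
  have main : ∀ n m : ℕ, ∀ p q r, idx p = n → idx q + idx r = m →
      D p q → D q r → D r p → False := by
    intro n
    induction n using Nat.strong_induction_on with
    | _ n ihn =>
      intro m
      induction m using Nat.strong_induction_on with
      | _ m ihm =>
        intro p q r hn hm h1 h2 h3
        rcases lt_trichotomy (idx r) (idx p) with h | h | h
        · exact ihn _ (hn ▸ h) _ r p q rfl rfl h3 h1 h2
        · have := hidx h; subst this; exact hFi _ (hDF _ _ h3)
        · obtain ⟨s, t, hst, hlt⟩ := hseed r p (hDF _ _ h3) h3 h
          obtain ⟨e1, e2, e3⟩ := htri' q (r, p) (s, t) hst h2 h3 h1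
          simp only at e1 e2 e3
          rcases hlt with hlt | ⟨rfl, hlt⟩
          · exact ihn _ (hn ▸ hlt) _ s t q rfl rfl e2 e3 e1
          · exact ihm (idx t + idx q) (by omega) s t q hn rfl e2 e3 e1
  exact fun a b c h1 h2 h3 => main _ _ a b c rfl rfl h1 h2 h3


/-! ### The structure of a circularly-paired graph without true twins -/

/-- A partial order with an order-reversing involution without `a ≤ bar a`. It encodes a
circularly-paired graph without true twins: `≤` is inclusion of closed neighbourhoods, `bar` the
partner in a circular pair, and `a`, `b` are adjacent iff `¬ a ≤ bar b`. -/
class Pocset (W : Type) extends PartialOrder W where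
  bar : W → W
  bar_bar : ∀ a, bar (bar a) = a
  bar_le : ∀ a b, a ≤ b → bar b ≤ bar a
  not_le_bar : ∀ a, ¬ a ≤ bar a

namespace Pocset

variable {W : Type} [Pocset W]

theorem le_bar_comm {a b : W} (h : a ≤ bar b) : b ≤ bar a := by
  have := bar_le _ _ h; rwa [bar_bar] at this

theorem bar_le_comm {a b : W} (h : bar a ≤ b) : bar b ≤ a := by
  have := bar_le _ _ h; rwa [bar_bar] at this

theorem not_bar_le (a : W) : ¬ bar a ≤ a := fun h =>
  not_le_bar (bar a) (by rwa [bar_bar])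

/-- `x` and `y` are incomparable: non-adjacent, or overlapping. -/
def Inc (x y : W) : Prop := ¬ x ≤ y ∧ ¬ y ≤ x

theorem Inc.symm {x y : W} (h : Inc x y) : Inc y x := ⟨h.2, h.1⟩

theorem inc_bar (x : W) : Inc x (bar x) := ⟨not_le_bar x, not_bar_le x⟩

theorem inc_of_le_bar {x y : W} (h : x ≤ bar y) : Inc x y :=
  ⟨fun h' => not_le_bar x (h.trans (bar_le _ _ h')), fun h' => not_le_bar y (h'.trans h)⟩

/-- `y` avoids the edge `xx'`: it is incomparable to both ends, `x` and `x'` are adjacent, and if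
`y` meets both of them then they are comparable. -/
def AvoidE (y x x' : W) : Prop :=
  Inc y x ∧ Inc y x' ∧ ¬ x ≤ bar x' ∧ (x ≤ x' ∨ x' ≤ x ∨ y ≤ bar x ∨ y ≤ bar x')

theorem AvoidE.symm {y x x' : W} (h : AvoidE y x x') : AvoidE y x' x :=
  ⟨h.2.1, h.1, fun h' => h.2.2.1 (le_bar_comm h'), by
    rcases h.2.2.2 with h | h | h | h
    · exact .inr (.inl h)
    · exact .inl h
    · exact .inr (.inr (.inr h))
    · exact .inr (.inr (.inl h))⟩

/-- The moves of pairs anchored at `z`: `x` moves to `x'` next to `y`, and `z` avoids the whole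
move. -/
def MvZ (z y x x' : W) : Prop := AvoidE y x x' ∧ AvoidE z x x' ∧ Inc z y

/-! ### Cutting the circle and orienting the pieces -/

open Relation in
/-- Cutting the circle inside a minimal `z`. The set `X` consists of the vertices disjoint from `z`
and of the vertices `a` which overlap `z` together with their partner and satisfy `D a (bar a)`.
The orientation `D`, obtained from moves anchored at `z`, is invariant within `X` even under
moves that `z` does not avoid. -/
theorem stage_one (z : W) (hmin : ∀ a, a ≤ z → a = z)
    (idx : W → ℕ) (hidx : Function.Injective idx)
    (hinv : ∀ x y : W, Inc x y → Inc x z → Inc y z →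
      ¬ ReflTransGen (PairStep (MvZ z)) (x, y) (y, x)) :
    ∃ (X : Set W) (D : W → W → Prop), (∀ a, a ∈ X ↔ bar a ∉ X) ∧
      (∀ a ∈ X, ∀ b ∈ X, ¬ bar a ≤ b) ∧
      (∀ x ∈ X, ∀ y ∈ X, Inc x y → (D x y ↔ ¬ D y x)) ∧
      (∀ y ∈ X, ∀ x ∈ X, ∀ x' ∈ X, AvoidE y x x' → D x y → D x' y) := by
  obtain ⟨D, hD, hF, -⟩ := exists_orientation (MvZ z)
    (fun x y => Inc x y ∧ Inc x z ∧ Inc y z) idx hidx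
    (fun y x x' h => ⟨h.1.symm, h.2.1.symm, h.2.2⟩)
    (fun x y h => ⟨h.1.symm, h.2.2, h.2.1⟩) (fun x h => h.1.1 le_rfl)
    (fun y x x' h => ⟨h.1.2.1.symm, h.2.1.2.1.symm, h.2.2.symm⟩)
    (fun x y h => hinv x y h.1 h.2.1 h.2.2)
  have hDr : ∀ y x x', MvZ z y x x' → D y x → D y x' := by
    intro y x x' h hd
    by_contra hn
    have h1 := (hF x' y ⟨h.1.2.1.symm, h.2.1.2.1.symm, h.2.2.symm⟩).2 hn
    have h2 := hD y x' x ⟨h.1.symm, h.2.1.symm, h.2.2⟩ h1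
    exact (hF y x ⟨h.1.1, h.2.2.symm, h.2.1.1.symm⟩).1 hd h2
  let C : W → Prop := fun a => Inc a z ∧ Inc (bar a) z
  let X : Set W := {a | a ≤ bar z ∨ (C a ∧ D a (bar a))}
  have hXz : ∀ a ∈ X, Inc a z := by
    rintro a (h | h)
    · exact inc_of_le_bar h
    · exact h.1.1
  -- the orientation of a crossing vertex against its partner is transported along `bar x ≥ y`
  have hmove : ∀ x y, C x → D x (bar x) → Inc x y → Inc y z → (y ≤ bar x ∨ bar x ≤ y ∨ y ≤ bar z) →
      D x y := by
    intro x y hC hd hxy hyz h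
    refine hDr _ _ _ ⟨⟨inc_bar x, hxy, fun h' => hxy.2 ?_, ?_⟩, ⟨hC.2.symm, hyz.symm, fun h' => hxy.2 ?_, ?_⟩, hC.1.symm⟩ hd
    · have := bar_le _ _ h'; rwa [bar_bar, bar_bar] at this
    · right; right; left; rw [bar_bar]
    · have := bar_le _ _ h'; rwa [bar_bar, bar_bar] at this
    · rcases h with h | h | h
      · exact .inr (.inl h)
      · exact .inl h
      · exact .inr (.inr (.inr (le_bar_comm h)))
  refine ⟨X, D, ?_, ?_, fun x hx y hy h => hF x y ⟨h, hXz x hx, hXz y hy⟩, ?_⟩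
  · intro a
    by_cases h1 : a ≤ bar z
    · refine iff_of_true (.inl h1) ?_
      rintro (h | ⟨h, -⟩)
      · exact not_le_bar z ((bar_bar a ▸ bar_bar z ▸ bar_le _ _ h : z ≤ a).trans h1)
      · exact h.1.2 (le_bar_comm h1)
    · by_cases h2 : bar a ≤ bar z
      · refine iff_of_false ?_ (fun h => h (.inl h2))
        rintro (h | ⟨h, -⟩)
        · exact h1 h
        · exact h.1.2 (bar_bar a ▸ bar_bar z ▸ bar_le _ _ h2 : z ≤ a)
      · have hza : ¬ z ≤ a := fun h => h2 (bar_le _ _ h)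
        have hza' : ¬ z ≤ bar a := fun h => h1 (le_bar_comm h)
        have hC : C a := ⟨⟨fun h => hza (hmin _ h).ge, hza⟩, ⟨fun h => hza' (hmin _ h).ge, hza'⟩⟩
        have hC' : C (bar a) := ⟨hC.2, (bar_bar a).symm ▸ hC.1⟩
        have e1 : a ∈ X ↔ D a (bar a) :=
          ⟨fun h => h.elim (fun h => absurd h h1) (fun h => h.2), fun h => .inr ⟨hC, h⟩⟩
        have e2 : bar a ∈ X ↔ D (bar a) a := by
          refine ⟨fun h => h.elim (fun h => absurd h h2) (fun h => ?_), fun h => .inr ⟨hC', ?_⟩⟩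
          · have := h.2; rwa [bar_bar] at this
          · rwa [bar_bar]
        rw [e1, e2]
        exact hF _ _ ⟨inc_bar a, hC.1, hC.2⟩
  · intro a ha b hb hab
    have hinc : Inc a b :=
      ⟨fun h => not_bar_le b ((bar_le_comm hab).trans h), fun h => not_bar_le a (hab.trans h)⟩
    have key : ∀ a ∈ X, ∀ b ∈ X, bar a ≤ b → C a ∧ D a (bar a) := by
      rintro a (h | h) b hb hab
      · exact absurd ((le_bar_comm h).trans hab) (hXz b hb).2
      · exact h
    obtain ⟨c1, d1⟩ := key a ha b hb hab
    obtain ⟨c2, d2⟩ := key b hb a ha (bar_le_comm hab)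
    exact (hF a b ⟨hinc, c1.1, c2.1⟩).1 (hmove a b c1 d1 hinc c2.1 (.inr (.inl hab)))
      (hmove b a c2 d2 hinc.symm c1.1 (.inr (.inl (bar_le_comm hab))))
  · intro y hy x hx x' hx' h hd
    by_cases hz : x ≤ x' ∨ x' ≤ x ∨ z ≤ bar x ∨ z ≤ bar x'
    · exact hD y x x' ⟨h, ⟨(hXz x hx).symm, (hXz x' hx').symm, h.2.2.1, hz⟩, (hXz y hy).symm⟩ hd
    push Not at hz
    have hcx : C x ∧ D x (bar x) := hx.resolve_left fun h => hz.2.2.1 (le_bar_comm h)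
    have hcx' : C x' ∧ D x' (bar x') := hx'.resolve_left fun h => hz.2.2.2 (le_bar_comm h)
    rcases id hy with hy' | hy'
    · exact hmove x' y hcx'.1 hcx'.2 h.2.1.symm (hXz y hy) (.inr (.inr hy'))
    · exfalso
      have hno : ∀ w, C w ∧ D w (bar w) → Inc y w → ¬ y ≤ bar w := by
        intro w hw hyw hle
        exact (hF y w ⟨hyw, hXz y hy, hw.1.1⟩).1
          (hmove y w hy'.1 hy'.2 hyw hw.1.1 (.inl (le_bar_comm hle)))
          (hmove w y hw.1 hw.2 hyw.symm (hXz y hy) (.inl hle))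
      rcases h.2.2.2 with h1 | h1 | h1 | h1
      · exact hz.1 h1
      · exact hz.2.1 h1
      · exact hno x hcx h.1 h1
      · exact hno x' hcx' h.2.1 h1

/-- An orientation of the incomparable pairs of `X` that is invariant under moves shows that no
pair of `X` is inverted by moves inside `X`; it can then be replaced by one that has, in addition,
no cyclic triangles. -/
theorem stage_two (idx : W → ℕ) (hidx : Function.Injective idx) (X : Set W) (D₀ : W → W → Prop)
    (hF : ∀ x ∈ X, ∀ y ∈ X, Inc x y → (D₀ x y ↔ ¬ D₀ y x))
    (hM : ∀ y ∈ X, ∀ x ∈ X, ∀ x' ∈ X, AvoidE y x x' → D₀ x y → D₀ x' y) :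
    ∃ D : W → W → Prop, (∀ x y, D x y → x ∈ X ∧ y ∈ X ∧ Inc x y) ∧
      (∀ x ∈ X, ∀ y ∈ X, Inc x y → (D x y ↔ ¬ D y x)) ∧
      (∀ y ∈ X, ∀ x ∈ X, ∀ x' ∈ X, AvoidE y x x' → D x y → D x' y) ∧
      (∀ y ∈ X, ∀ x ∈ X, ∀ x' ∈ X, AvoidE y x x' → D y x → D y x') ∧
      (∀ a b c, D a b → D b c → D c a → False) := by
  let Mv : W → W → W → Prop := fun y x x' => y ∈ X ∧ x ∈ X ∧ x' ∈ X ∧ AvoidE y x x'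
  let F : W → W → Prop := fun x y => x ∈ X ∧ y ∈ X ∧ Inc x y
  have hs : ∀ y x x', Mv y x x' → Mv y x' x := fun y x x' h => ⟨h.1, h.2.2.1, h.2.1, h.2.2.2.symm⟩
  have hFs : ∀ x y, F x y → F y x := fun x y h => ⟨h.2.1, h.1, h.2.2.symm⟩
  have hFi : ∀ x, ¬ F x x := fun x h => h.2.2.1 le_rfl
  have hMF : ∀ y x x', Mv y x x' → F x' y := fun y x x' h => ⟨h.2.2.1, h.1, h.2.2.2.2.1.symm⟩
  -- relations with the two closure properties below are preserved by right moves as well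
  have right : ∀ D : W → W → Prop, (∀ x y, F x y → (D x y ↔ ¬ D y x)) →
      (∀ y x x', Mv y x x' → D x y → D x' y) → ∀ y x x', Mv y x x' → D y x → D y x' := by
    intro D h1 h2 y x x' h hd
    by_contra hn
    have h3 := (h1 x' y (hMF _ _ _ h)).2 hn
    exact (h1 y x (hFs _ _ (hMF _ _ _ (hs _ _ _ h)))).1 hd (h2 y x' x (hs _ _ _ h) h3)
  have hF' : ∀ x y, F x y → (D₀ x y ↔ ¬ D₀ y x) := fun x y h => hF x h.1 y h.2.1 h.2.2
  have hM' : ∀ y x x', Mv y x x' → D₀ x y → D₀ x' y := fun y x x' h =>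
    hM y h.1 x h.2.1 x' h.2.2.1 h.2.2.2
  have path : ∀ p q : W × W, Relation.ReflTransGen (PairStep Mv) p q →
      ((D₀ p.1 p.2 → D₀ q.1 q.2) ∧ (D₀ p.2 p.1 → D₀ q.2 q.1)) := by
    intro p q h
    induction h with
    | refl => exact ⟨id, id⟩
    | tail _ h ih =>
      cases h with
      | left h => exact ⟨fun h' => hM' _ _ _ h (ih.1 h'), fun h' => right _ hF' hM' _ _ _ h (ih.2 h')⟩
      | right h => exact ⟨fun h' => right _ hF' hM' _ _ _ h (ih.1 h'), fun h' => hM' _ _ _ h (ih.2 h')⟩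
  obtain ⟨D₁, e1, e2, e3⟩ := exists_orientation Mv F idx hidx hs hFs hFi hMF (by
    intro x y h hp
    have h1 := path _ _ hp
    have h2 := hF' x y h
    simp only at h1
    tauto)
  let D : W → W → Prop := fun x y => D₁ x y ∧ F x y
  have f1 : ∀ x y, F x y → (D x y ↔ ¬ D y x) := by
    intro x y h
    have := e2 x y h
    have := hFs x y h
    simp only [D]; tauto
  have f2 : ∀ y x x', Mv y x x' → D x y → D x' y := fun y x x' h h' =>
    ⟨e1 y x x' h h'.1, hMF _ _ _ h⟩
  have f3 := right D f1 f2
  have f4 : ∀ x y, D x y → F x y := fun x y h => h.2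
  have f5 : ∀ x y, D x y → ¬ D y x := fun x y h => (f1 x y h.2).1 h
  -- the triangle lemma, for a move of the vertex `b`
  have tri : ∀ D : W → W → Prop, (∀ x y, D x y → F x y) → (∀ x y, F x y → (D x y ↔ ¬ D y x)) →
      (∀ y x x', Mv y x x' → D x y → D x' y) → (∀ y x x', Mv y x x' → D y x → D y x') →
      ∀ a b b' c, Mv c b b' → D a b → D b c → D c a → D a b' := by
    clear path e3
    intro D g1 g2 g3 g4 a b b' c hm h1 h2 h3
    obtain ⟨haX, -, hab⟩ := g1 _ _ h1
    obtain ⟨hcX, hbX, hb'X, hcb, hcb', hbb, hor⟩ := hm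
    obtain ⟨-, -, hca⟩ := g1 _ _ h3
    have hDac : ¬ D a c := fun h => (g2 _ _ ⟨haX, hcX, hca.symm⟩).1 h h3
    have hDb'c : D b' c := g3 c b b' ⟨hcX, hbX, hb'X, hcb, hcb', hbb, hor⟩ h2
    by_cases hcomp : Inc a b'
    · refine g4 a b b' ⟨haX, hbX, hb'X, hab, hcomp, hbb, ?_⟩ h1
      by_contra hn
      push Not at hn
      obtain ⟨n1, n2, n3, n4⟩ := hn
      rcases hor with h | h | h | h
      · exact n1 h
      · exact n2 h
      · exact hDac (g3 c b a ⟨hcX, hbX, haX, hcb, hca, fun h' => n3 (le_bar_comm h'),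
          .inr (.inr (.inl h))⟩ h2)
      · exact hDac (g3 c b' a ⟨hcX, hb'X, haX, hcb', hca, fun h' => n4 (le_bar_comm h'),
          .inr (.inr (.inl h))⟩ hDb'c)
    · exfalso
      refine hDac (g3 c b' a ⟨hcX, hb'X, haX, hcb', hca, ?_, ?_⟩ hDb'c)
      · intro h; exact hcomp (inc_of_le_bar h).symm
      · simp only [Inc, not_and_or, not_not] at hcomp
        tauto
  refine ⟨D, f4, fun x hx y hy h => f1 x y ⟨hx, hy, h⟩,
    fun y hy x hx x' hx' h => f2 y x x' ⟨hy, hx, hx', h⟩,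
    fun y hy x hx x' hx' h => f3 y x x' ⟨hy, hx, hx', h⟩, ?_⟩
  refine no_cyclic_triangle Mv F idx hidx hFi D f4 (fun x y h h' => e3 x y h h'.1) ?_
  intro a p q h h1 h2 h3
  cases h with
  | @left x x' y h => exact ⟨tri D f4 f1 f2 f3 a x x' y h h1 h2 h3, f2 _ _ _ h h2, h3⟩
  | @right x y y' h =>
    refine ⟨h1, f3 _ _ _ h h2, ?_⟩
    exact tri (fun x y => D y x) (fun x y h => hFs _ _ (f4 _ _ h)) (fun x y h => f1 _ _ (hFs _ _ h))
      f3 f2 a y y' x h h3 h2 h1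

end Pocset


namespace Pocset

variable {W : Type} [Pocset W]

/-! ### From an orientation to the order of the endpoints -/

/-- The linear order of the endpoints. Members of `X` are intervals of a line, and `D a b` means
that both endpoints of `a` precede those of `b`. An element `e ∈ X` stands for the left endpoint of
`e`, and `e ∉ X` for the right endpoint of `bar e`, that is, the left endpoint of the complementary
arc `e`. A right endpoint precedes a left one exactly when the two intervals are disjoint in this
order. -/
def PointLT (X : Set W) (D : W → W → Prop) (e f : W) : Prop :=
  (e ∈ X ∧ f ∈ X ∧ (D e f ∨ f < e)) ∨
  (e ∉ X ∧ f ∉ X ∧ (D (bar e) (bar f) ∨ bar e < bar f)) ∨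
  (e ∈ X ∧ f ∉ X ∧ ¬ (D (bar f) e ∧ bar f ≤ bar e)) ∨
  (e ∉ X ∧ f ∈ X ∧ (D (bar e) f ∧ bar e ≤ bar f))

/-- The arc with left endpoint `lam a` and right endpoint `lam (bar a)`, the latter excluded,
contains the point `lam b`. It wraps around when `lam (bar a) ≤ lam a`. -/
def ArcHits (lam : W → ℕ) (a b : W) : Prop :=
  (lam a < lam (bar a) ∧ lam a ≤ lam b ∧ lam b < lam (bar a)) ∨
  (¬ lam a < lam (bar a) ∧ (lam a ≤ lam b ∨ lam b < lam (bar a)))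

theorem bar_inj {a b : W} (h : bar a = bar b) : a = b := by
  rw [← bar_bar a, h, bar_bar]

/-- The order `PointLT` is linear, and the position `lam` of an endpoint in it turns `W` into a
circular-arc model: `a` and `b` are adjacent iff one arc contains the left endpoint of the other.
The facts `LL`, `RR`, `RLL`, `RRL` are the instances of transitivity of `PointLT` for left (`L`)
and right (`R`) endpoints. -/
theorem exists_lam [Finite W] (X : Set W) (D : W → W → Prop)
    (hX : ∀ a, a ∈ X ↔ bar a ∉ X) (hXb : ∀ a ∈ X, ∀ b ∈ X, ¬ bar a ≤ b)
    (hDX : ∀ x y, D x y → x ∈ X ∧ y ∈ X ∧ Inc x y)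
    (hDt : ∀ x ∈ X, ∀ y ∈ X, Inc x y → (D x y ↔ ¬ D y x))
    (hDl : ∀ y ∈ X, ∀ x ∈ X, ∀ x' ∈ X, AvoidE y x x' → D x y → D x' y)
    (hDr : ∀ y ∈ X, ∀ x ∈ X, ∀ x' ∈ X, AvoidE y x x' → D y x → D y x')
    (hDc : ∀ a b c, D a b → D b c → D c a → False) :
    ∃ lam : W → ℕ, Function.Injective lam ∧
      ∀ a b : W, ¬ a ≤ bar b ↔ ArcHits lam a b ∨ ArcHits lam b a := by
  have hirr : ∀ a, ¬ D a a := fun a h => (hDX a a h).2.2.1 le_rfl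
  have hasym : ∀ a b, D a b → ¬ D b a := fun a b h =>
    (hDt a (hDX _ _ h).1 b (hDX _ _ h).2.1 (hDX _ _ h).2.2).1 h
  have htot : ∀ a ∈ X, ∀ b ∈ X, Inc a b → D a b ∨ D b a := fun a ha b hb h => by
    have := hDt a ha b hb h; tauto
  have cmp : ∀ {a b : W}, ¬ Inc a b → a ≤ b ∨ b ≤ a := fun h => by
    simp only [Inc, not_and_or, not_not] at h; exact h
  have cmp' : ∀ {a b : W}, (a ≤ b ∨ b ≤ a) → ¬ a ≤ bar b := fun h h' => by
    have := inc_of_le_bar h'; exact h.elim this.1 this.2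
  have or4 : ∀ {a b : W} {p q : Prop}, (a ≤ b ∨ b ≤ a) → (a ≤ b ∨ b ≤ a ∨ p ∨ q) := by tauto
  -- comparable vertices lie on the same side of a vertex incomparable to both
  have side : ∀ a b c, D a b → D b c → ¬ (a ≤ c ∨ c ≤ a) := by
    intro a b c h1 h2 h
    obtain ⟨ha, hb, hab⟩ := hDX _ _ h1
    obtain ⟨-, hc, hbc⟩ := hDX _ _ h2
    exact hasym _ _ h2 (hDl b hb a ha c hc ⟨hab.symm, hbc, cmp' h, or4 h⟩ h1)
  have Dtrans : ∀ a b c, D a b → D b c → D a c := by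
    intro a b c h1 h2
    obtain ⟨ha, hb, hab⟩ := hDX _ _ h1
    obtain ⟨-, hc, hbc⟩ := hDX _ _ h2
    by_cases h : Inc a c
    · exact (htot a ha c hc h).resolve_right fun h3 => hDc a b c h1 h2 h3
    · exact absurd (cmp h) (side a b c h1 h2)
  have m1 : ∀ a b c, c ∈ X → D a b → (b ≤ c ∨ c ≤ b) → Inc a c → D a c := by
    intro a b c hc h1 h h3
    obtain ⟨ha, hb, hab⟩ := hDX _ _ h1
    exact hDr a ha b hb c hc ⟨hab, h3, cmp' h, or4 h⟩ h1
  have m2 : ∀ a b c, c ∈ X → D a b → (a ≤ c ∨ c ≤ a) → Inc c b → D c b := by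
    intro a b c hc h1 h h3
    obtain ⟨ha, hb, hab⟩ := hDX _ _ h1
    exact hDl b hb a ha c hc ⟨hab.symm, h3.symm, cmp' h, or4 h⟩ h1
  have LL : ∀ a ∈ X, ∀ b ∈ X, ∀ c ∈ X, (D a b ∨ b < a) → (D b c ∨ c < b) → (D a c ∨ c < a) := by
    rintro a ha b hb c hc (h1 | h1) (h2 | h2)
    · exact .inl (Dtrans a b c h1 h2)
    · obtain ⟨-, -, hab⟩ := hDX _ _ h1
      by_cases h : Inc a c
      · exact .inl (m1 a b c hc h1 (.inr h2.le) h)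
      · exact .inr (((cmp h).resolve_left fun h => hab.1 (h.trans h2.le)).lt_of_ne
          (by rintro rfl; exact hab.1 h2.le))
    · obtain ⟨-, -, hbc⟩ := hDX _ _ h2
      by_cases h : Inc a c
      · exact .inl (m2 b c a ha h2 (.inl h1.le) h)
      · exact .inr (((cmp h).resolve_left fun h => hbc.1 (h1.le.trans h)).lt_of_ne
          (by rintro rfl; exact hbc.1 h1.le))
    · exact .inr (h2.trans h1)
  have RR : ∀ a ∈ X, ∀ b ∈ X, ∀ c ∈ X, (D a b ∨ a < b) → (D b c ∨ b < c) → (D a c ∨ a < c) := by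
    rintro a ha b hb c hc (h1 | h1) (h2 | h2)
    · exact .inl (Dtrans a b c h1 h2)
    · obtain ⟨-, -, hab⟩ := hDX _ _ h1
      by_cases h : Inc a c
      · exact .inl (m1 a b c hc h1 (.inl h2.le) h)
      · exact .inr (((cmp h).resolve_right fun h => hab.2 (h2.le.trans h)).lt_of_ne
          (by rintro rfl; exact hab.2 h2.le))
    · obtain ⟨-, -, hbc⟩ := hDX _ _ h2
      by_cases h : Inc a c
      · exact .inl (m2 b c a ha h2 (.inr h1.le) h)
      · exact .inr (((cmp h).resolve_right fun h => hbc.2 (h.trans h1.le)).lt_of_ne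
          (by rintro rfl; exact hbc.2 h1.le))
    · exact .inr (h1.trans h2)
  have RLL : ∀ c ∈ X, ∀ a ∈ X, ∀ b ∈ X, (D c a ∧ c ≤ bar a) → (D a b ∨ b < a) →
      (D c b ∧ c ≤ bar b) := by
    rintro c hc a ha b hb ⟨h1, h2⟩ (h3 | h3)
    · obtain ⟨-, -, hab⟩ := hDX _ _ h3
      refine ⟨Dtrans _ _ _ h1 h3, ?_⟩
      by_contra hn
      exact hasym _ _ h3 (hDl a ha c hc b hb ⟨(hDX _ _ h1).2.2.symm, hab, hn,
        .inr (.inr (.inl (le_bar_comm h2)))⟩ h1)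
    · have : c ≤ bar b := h2.trans (bar_le _ _ h3.le)
      exact ⟨m1 c a b hb h1 (.inr h3.le) (inc_of_le_bar this), this⟩
  have RRL : ∀ a ∈ X, ∀ b ∈ X, ∀ c ∈ X, (D a b ∨ a < b) → (D b c ∧ b ≤ bar c) →
      (D a c ∧ a ≤ bar c) := by
    rintro a ha b hb c hc (h3 | h3) ⟨h1, h2⟩
    · obtain ⟨-, -, hab⟩ := hDX _ _ h3
      refine ⟨Dtrans _ _ _ h3 h1, ?_⟩
      by_contra hn
      exact hasym _ _ h1 (hDl b hb a ha c hc ⟨hab.symm, (hDX _ _ h1).2.2, hn,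
        .inr (.inr (.inr h2))⟩ h3)
    · have : a ≤ bar c := h3.le.trans h2
      exact ⟨m2 b c a ha h1 (.inr h3.le) (inc_of_le_bar this), this⟩
  set T := PointLT X D with hT
  have mb : ∀ a, a ∉ X → bar a ∈ X := fun a h => by
    by_contra h'; exact h ((hX a).2 h')
  have mb' : ∀ a, a ∈ X → bar a ∉ X := fun a h => (hX a).1 h
  have Tirr : ∀ e, ¬ T e e := by
    intro e h
    simp only [hT, PointLT, lt_irrefl] at h
    by_cases he : e ∈ X <;> simp [he, hirr] at h
  have dich : ∀ a ∈ X, ∀ b ∈ X, a ≠ b → D a b ∨ D b a ∨ a < b ∨ b < a := by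
    intro a ha b hb hne
    by_cases h : Inc a b
    · exact (htot a ha b hb h).imp_right .inl
    · rcases cmp h with h | h
      · exact .inr (.inr (.inl (h.lt_of_ne hne)))
      · exact .inr (.inr (.inr (h.lt_of_ne hne.symm)))
  have Ttot : ∀ e f, e ≠ f → T e f ∨ T f e := by
    intro e f hne
    simp only [hT, PointLT]
    by_cases he : e ∈ X <;> by_cases hf : f ∈ X <;>
      simp only [he, hf, not_true, not_false_iff, true_and, false_and, or_false, false_or]
    · rcases dich e he f hf hne with h | h | h | h <;> simp [h]
    · exact (em _).symm
    · exact em _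
    · rcases dich _ (mb e he) _ (mb f hf) (fun h => hne (bar_inj h)) with h | h | h | h <;> simp [h]
  have Ttrans : ∀ e f g, T e f → T f g → T e g := by
    have Dlt : ∀ a b, D a b → ¬ a < b ∧ ¬ b < a := fun a b h =>
      ⟨fun h' => (hDX _ _ h).2.2.1 h'.le, fun h' => (hDX _ _ h).2.2.2 h'.le⟩
    have Tasym : ∀ e f, T e f → ¬ T f e := by
      intro e f h1 h2
      simp only [hT, PointLT] at h1 h2
      by_cases he : e ∈ X <;> by_cases hf : f ∈ X <;>
        simp only [he, hf, not_true, not_false_iff, true_and, false_and, or_false, false_or]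
          at h1 h2
      · rcases h1 with h1 | h1 <;> rcases h2 with h2 | h2
        · exact hasym _ _ h1 h2
        · exact (Dlt _ _ h1).1 h2
        · exact (Dlt _ _ h2).1 h1
        · exact h1.asymm h2
      · exact h1 h2
      · exact h2 h1
      · rcases h1 with h1 | h1 <;> rcases h2 with h2 | h2
        · exact hasym _ _ h1 h2
        · exact (Dlt _ _ h1).2 h2
        · exact (Dlt _ _ h2).2 h1
        · exact h1.asymm h2
    have cyc : ∀ e f g, e ∈ X → T e f → T f g → ¬ T g e := by
      intro e f g he h1 h2 h3
      simp only [hT, PointLT] at h1 h2 h3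
      by_cases hf : f ∈ X <;> by_cases hg : g ∈ X <;> simp only [he, hf, hg, not_true, not_false_iff, true_and, false_and, or_false, false_or] at h1 h2 h3
      · have := LL e he f hf g hg h1 h2
        exact (Tasym e g (.inl ⟨he, hg, this⟩)) (.inl ⟨hg, he, h3⟩)
      · exact h2 (RLL _ (mb g hg) e he f hf h3 h1)
      · exact h1 (RLL _ (mb f hf) g hg e he h2 h3)
      · exact h1 (RRL _ (mb f hf) _ (mb g hg) e he h2 h3)
    have cyc' : ∀ e f g, T e f → T f g → ¬ T g e := by
      intro e f g h1 h2 h3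
      by_cases he : e ∈ X
      · exact cyc e f g he h1 h2 h3
      by_cases hf : f ∈ X
      · exact cyc f g e hf h2 h3 h1
      by_cases hg : g ∈ X
      · exact cyc g e f hg h3 h1 h2
      have q1 := h1; have q2 := h2; have q3 := h3
      simp only [hT, PointLT, he, hf, hg, not_false_iff, true_and, false_and, or_false, false_or] at h1 h2 h3
      have := RR _ (mb e he) _ (mb f hf) _ (mb g hg) h1 h2
      exact (Tasym e g (.inr (.inl ⟨he, hg, this⟩))) q3
    intro e f g h1 h2
    have hne : e ≠ g := by rintro rfl; exact Tasym _ _ h1 h2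
    exact (Ttot e g hne).resolve_right (cyc' e f g h1 h2)
  -- the rank in the linear order `T`
  let lam : W → ℕ := fun e => {f | T f e}.ncard
  have hlt : ∀ e f, T e f → lam e < lam f := by
    intro e f h
    refine Set.ncard_lt_ncard ?_ (Set.toFinite _)
    refine ⟨fun g hg => Ttrans g e f hg h, fun hs => Tirr e (hs h)⟩
  have hinj : Function.Injective lam := by
    intro e f h
    by_contra hne
    rcases Ttot e f hne with h' | h' <;> have := hlt _ _ h' <;> omega
  have hiff : ∀ e f, lam e < lam f ↔ T e f := by
    intro e f
    refine ⟨fun h => ?_, hlt e f⟩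
    refine (Ttot e f (by rintro rfl; omega)).resolve_right fun h' => ?_
    have := hlt _ _ h'; omega
  refine ⟨lam, hinj, ?_⟩
  have wX : ∀ a ∈ X, lam a < lam (bar a) := by
    intro a ha
    rw [hiff]
    refine .inr (.inr (.inl ⟨ha, mb' a ha, fun h => ?_⟩))
    rw [bar_bar] at h; exact hirr a h.1
  have wX' : ∀ a, a ∉ X → lam (bar a) < lam a := by
    intro a ha
    have := wX _ (mb a ha); rwa [bar_bar] at this
  have RLiff : ∀ a ∈ X, ∀ b ∈ X, lam (bar a) < lam b ↔ D a b ∧ a ≤ bar b := by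
    intro a ha b hb
    rw [hiff]
    simp only [hT, PointLT, mb' a ha, hb, bar_bar, not_true, not_false_iff, true_and, false_and,
      false_or]
  -- an interval `a` misses the complement `b` of an interval iff it lies inside `bar b`
  have mixed : ∀ a ∈ X, ∀ b, b ∉ X → (¬ a ≤ bar b ↔ ArcHits lam a b ∨ ArcHits lam b a) := by
    intro a ha b hb
    have h1 := wX a ha
    have h2 := wX' b hb
    have h3 : ArcHits lam a b ∨ ArcHits lam b a ↔
        ¬ (lam (bar b) ≤ lam a ∧ lam (bar a) ≤ lam b) := by
      unfold ArcHits; omega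
    rw [h3, not_iff_not]
    have e1 : lam a < lam (bar b) ↔ D a (bar b) ∨ bar b < a := by
      rw [hiff]; simp only [hT, PointLT, ha, mb b hb, not_true, true_and, false_and, or_false]
    have e2 : lam b < lam (bar a) ↔ D (bar b) a ∨ bar b < a := by
      rw [hiff]; simp only [hT, PointLT, hb, mb' a ha, bar_bar, not_false_iff, true_and, false_and,
        or_false, false_or]
    rw [← not_lt, ← not_lt, e1, e2]
    constructor
    · intro h
      refine ⟨?_, ?_⟩ <;> rintro (h' | h')
      · exact (hDX _ _ h').2.2.1 h
      · exact h'.not_ge h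
      · exact (hDX _ _ h').2.2.2 h
      · exact h'.not_ge h
    · rintro ⟨h, h'⟩
      by_cases he : a = bar b
      · exact he.le
      · rcases dich a ha _ (mb b hb) he with h'' | h'' | h'' | h''
        · exact absurd (.inl h'') h
        · exact absurd (.inl h'') h'
        · exact h''.le
        · exact absurd (.inr h'') h
  intro a b
  by_cases ha : a ∈ X <;> by_cases hb : b ∈ X
  · have h1 := wX a ha
    have h2 := wX b hb
    have h3 : ArcHits lam a b ∨ ArcHits lam b a ↔
        ¬ (lam (bar a) < lam b ∨ lam (bar b) < lam a) := by
      have e1 : lam (bar a) ≠ lam b := fun h => mb' a ha (hinj h ▸ hb)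
      have e2 : lam (bar b) ≠ lam a := fun h => mb' b hb (hinj h ▸ ha)
      unfold ArcHits; omega
    rw [h3, not_iff_not, RLiff a ha b hb, RLiff b hb a ha]
    constructor
    · intro h
      rcases htot a ha b hb (inc_of_le_bar h) with h' | h'
      · exact .inl ⟨h', h⟩
      · exact .inr ⟨h', le_bar_comm h⟩
    · rintro (h | h)
      · exact h.2
      · exact le_bar_comm h.2
  · exact mixed a ha b hb
  · rw [or_comm, ← mixed b hb a ha, not_iff_not]
    exact ⟨le_bar_comm, le_bar_comm⟩
  · have h1 := wX' a ha
    have h2 := wX' b hb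
    refine iff_of_true (fun h => ?_) (by unfold ArcHits; omega)
    exact hXb _ (mb a ha) _ (mb b hb) (by rwa [bar_bar])

/-- The circle is cut inside a minimal element `z` of `W`. -/
theorem exists_lam_of_no_inversion [Finite W]
    (hinv : ∀ z x y : W, Inc x y → Inc x z → Inc y z →
      ¬ Relation.ReflTransGen (PairStep (MvZ z)) (x, y) (y, x)) :
    ∃ lam : W → ℕ, Function.Injective lam ∧
      ∀ a b : W, ¬ a ≤ bar b ↔ ArcHits lam a b ∨ ArcHits lam b a := by
  rcases isEmpty_or_nonempty W with hW | hW
  · exact ⟨fun _ => 0, fun a => hW.elim a, fun a => hW.elim a⟩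
  obtain ⟨n, ⟨e⟩⟩ := Finite.exists_equiv_fin W
  have hidx : Function.Injective (fun w => (e w : ℕ)) := fun a b h => e.injective (Fin.ext h)
  obtain ⟨z, hz⟩ := (Set.finite_univ (α := W)).exists_minimal Set.univ_nonempty
  obtain ⟨X, D₀, h1, h2, h3, h4⟩ := stage_one z (fun a h => le_antisymm h (hz.2 trivial h)) _ hidx (hinv z)
  obtain ⟨D, g1, g2, g3, g4, g5⟩ := stage_two _ hidx X D₀ h3 h4
  exact exists_lam X D h1 h2 g1 g2 g3 g4 g5

end Pocset


namespace LoopGraph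

variable {V W : Type}

/-! ### Circular completions -/

/-- The subgraph of `H` induced by `S`. -/
def restrict (H : LoopGraph W) (S : Set W) : LoopGraph S where
  Adj a b := H.Adj a b
  symm a b h := H.symm a b h
  refl a := H.refl a

theorem adj_comm (H : LoopGraph W) {a b : W} : H.Adj a b ↔ H.Adj b a :=
  ⟨H.symm a b, H.symm b a⟩

theorem overlaps_iff (G : LoopGraph V) {u v : V} (h : G.Adj u v) :
    G.Overlaps u v ↔ ¬ G.InclusionEdge u v := by
  unfold Overlaps InclusionEdge; tauto

theorem nbhd_subset_of_emb {G : LoopGraph V} {H : LoopGraph W} {f : V → W} (h : G.InducedEmb H f)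
    {u v : V} (huv : H.nbhd (f u) ⊆ H.nbhd (f v)) : G.nbhd u ⊆ G.nbhd v := fun x hx =>
  (h.2 v x).2 (huv ((h.2 u x).1 hx))

theorem spanning_of_emb {G : LoopGraph V} {H : LoopGraph W} {f : V → W} (h : G.InducedEmb H f)
    {u v : V} (huv : H.SpanningPair (f u) (f v)) : G.SpanningPair u v :=
  ⟨fun x hx => nbhd_subset_of_emb h (huv.1 _ fun h' => hx ((h.2 v x).2 h')),
   fun x hx => nbhd_subset_of_emb h (huv.2 _ fun h' => hx ((h.2 u x).2 h'))⟩

theorem restrict_nbhd (H : LoopGraph W) (S : Set W) {a b : S} (h : H.nbhd a ⊆ H.nbhd b) :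
    (H.restrict S).nbhd a ⊆ (H.restrict S).nbhd b := fun _ hx => h hx

theorem restrict_spanning (H : LoopGraph W) (S : Set W) {a b : S} (h : H.SpanningPair a b) :
    (H.restrict S).SpanningPair a b :=
  ⟨fun x hx => H.restrict_nbhd S (h.1 x hx), fun x hx => H.restrict_nbhd S (h.2 x hx)⟩

/-- Minimality of a completion: a set of vertices that contains `G` and a partner of each of its
members is everything, since the subgraph it induces is also a valid completion. The types of the
edges survive because neighbourhood inclusions and spanning pairs of `H` restrict to `S` and
further to `G`. -/
theorem eq_univ_of_completion {G : LoopGraph V} {H : LoopGraph W} {f : V → W}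
    (hc : G.IsCircularCompletion H f) (S : Set W) (hfS : ∀ u, f u ∈ S)
    (hS : ∀ u ∈ S, ∃ v ∈ S, H.CircularPair u v) : S = Set.univ := by
  obtain ⟨hfin, hemb, htype, -, hmin⟩ := hc
  let f' : V → S := fun u => ⟨f u, hfS u⟩
  have hemb' : G.InducedEmb (H.restrict S) f' :=
    ⟨fun u v h => hemb.1 (congrArg Subtype.val h), hemb.2⟩
  have htype' : G.SameEdgeTypes (H.restrict S) f' := by
    intro u v huv
    obtain ⟨t1, t2, t3⟩ := htype u v huv
    have huv' : (H.restrict S).Adj (f' u) (f' v) := (hemb'.2 u v).1 huv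
    have i1 : G.InclusionEdge u v ↔ (H.restrict S).InclusionEdge (f' u) (f' v) := by
      constructor
      · intro h
        exact ⟨huv', (t1.1 h).2.imp (H.restrict_nbhd S) (H.restrict_nbhd S)⟩
      · intro h
        exact ⟨huv, h.2.imp (nbhd_subset_of_emb hemb') (nbhd_subset_of_emb hemb')⟩
    have i2 : G.Overlaps u v ↔ (H.restrict S).Overlaps (f' u) (f' v) := by
      rw [overlaps_iff _ huv, overlaps_iff _ huv', i1]
    have i3 : G.TwoOverlapEdge u v ↔ (H.restrict S).TwoOverlapEdge (f' u) (f' v) :=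
      ⟨fun h => ⟨i2.1 h.1, H.restrict_spanning S (t3.1 h).2⟩,
        fun h => ⟨i2.2 h.1, spanning_of_emb hemb' h.2⟩⟩
    refine ⟨i1, ?_, i3⟩
    unfold TwoOverlapEdge at i3
    unfold OneOverlapEdge
    tauto
  have hpair : (H.restrict S).CircularlyPaired := by
    intro u
    obtain ⟨v, hv, h1, h2⟩ := hS u u.2
    exact ⟨⟨v, hv⟩, H.restrict_spanning S h1, h2⟩
  have hcard := hmin S (H.restrict S) f' inferInstance hemb' htype' hpair
  refine Set.eq_of_subset_of_ncard_le (Set.subset_univ S) ?_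
  rwa [Set.ncard_univ, ← Nat.card_coe_set_eq]

theorem SpanningPair.symm {H : LoopGraph W} {a b : W} (h : H.SpanningPair a b) :
    H.SpanningPair b a := ⟨h.2, h.1⟩

theorem CircularPair.symm {H : LoopGraph W} {a b : W} (h : H.CircularPair a b) :
    H.CircularPair b a := ⟨h.1.symm, fun hba => h.2 (H.symm _ _ hba)⟩

/-- A twin outside `G` could be deleted from the completion, and two twins inside `G` would be twins
of `G`. -/
theorem completion_twin_free {G : LoopGraph V} {H : LoopGraph W} {f : V → W}
    (ht : ∀ u v, ¬ G.TrueTwins u v) (hc : G.IsCircularCompletion H f) {a b : W}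
    (hab : H.nbhd a = H.nbhd b) : a = b := by
  by_contra hne
  have key : ∀ a b : W, a ≠ b → H.nbhd a = H.nbhd b → b ∈ Set.range f := by
    intro a b hne hab
    by_contra hb
    have hadj : ∀ x, H.Adj a x ↔ H.Adj b x := fun x => Set.ext_iff.1 hab x
    have := eq_univ_of_completion hc {b}ᶜ (fun u hu => hb ⟨u, hu⟩) (by
      intro w hw
      obtain ⟨v, hv⟩ := hc.2.2.2.1 w
      by_cases hvb : v = b
      · subst hvb
        refine ⟨a, hne, ⟨fun x hx => hv.1.1 x (by rwa [← hadj]), fun y hy => ?_⟩, ?_⟩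
        · rw [hab]; exact hv.1.2 y hy
        · rw [adj_comm, hadj, adj_comm]; exact hv.2
      · exact ⟨v, hvb, hv⟩)
    exact (this ▸ Set.mem_univ b : b ∈ ({b}ᶜ : Set W)) rfl
  obtain ⟨u, rfl⟩ := key b a (Ne.symm hne) hab.symm
  obtain ⟨v, rfl⟩ := key _ b hne hab
  refine ht u v ⟨fun h => hne (by rw [h]), Set.Subset.antisymm ?_ ?_⟩
  · exact nbhd_subset_of_emb hc.2.1 hab.subset
  · exact nbhd_subset_of_emb hc.2.1 hab.superset

/-- The vertices added by a completion are partners of vertices of `G` which have no partner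
in `G`. -/
theorem exists_partner {G : LoopGraph V} {H : LoopGraph W} {f : V → W}
    (hc : G.IsCircularCompletion H f) (bar : W → W) (hbar : ∀ a, H.CircularPair a (bar a)) :
    ∀ w, w ∉ Set.range f → ∃ u, bar (f u) = w ∧ ∀ v, ¬ H.CircularPair (f u) (f v) := by
  intro w hw
  have := eq_univ_of_completion hc
    (Set.range f ∪ {w | ∃ u, bar (f u) = w ∧ ∀ v, ¬ H.CircularPair (f u) (f v)})
    (fun u => .inl ⟨u, rfl⟩) (by
      rintro _ (⟨u, rfl⟩ | ⟨u, rfl, hu⟩)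
      · by_cases h : ∃ v, H.CircularPair (f u) (f v)
        · obtain ⟨v, hv⟩ := h
          exact ⟨f v, .inl ⟨v, rfl⟩, hv⟩
        · push Not at h
          exact ⟨bar (f u), .inr ⟨u, rfl, h⟩, hbar (f u)⟩
      · exact ⟨f u, .inl ⟨u, rfl⟩, (hbar (f u)).symm⟩)
  have hmem := Set.mem_univ w
  rw [← this] at hmem
  exact hmem.resolve_left hw

theorem CircularPair.adj_iff {H : LoopGraph W} {b b' : W} (h : H.CircularPair b b') (a : W) :
    H.Adj a b ↔ ¬ H.nbhd a ⊆ H.nbhd b' := by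
  constructor
  · intro hab hs
    exact h.2 (H.symm _ _ (hs hab))
  · intro hs
    by_contra hab
    exact hs (h.1.2 a fun hba => hab (H.symm _ _ hba))

/-- The pocset of a circularly-paired graph without true twins, for a choice `bar` of partners. -/
@[reducible] noncomputable def toPocset (H : LoopGraph W) (ht : ∀ a b, H.nbhd a = H.nbhd b → a = b)
    (bar : W → W) (hbar : ∀ a, H.CircularPair a (bar a)) : Pocset W where
  le a b := H.nbhd a ⊆ H.nbhd b
  le_refl _ := Set.Subset.rfl
  le_trans _ _ _ := Set.Subset.trans
  le_antisymm a b h h' := ht a b (h.antisymm h')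
  bar := bar
  bar_bar a := ht _ _ (by
    refine Set.Subset.antisymm ((hbar a).1.1 _ (hbar (bar a)).2) ?_
    exact (hbar (bar a)).1.2 _ fun h => (hbar a).2 (H.symm _ _ h))
  bar_le a b h := (hbar a).1.2 _ fun h' => (hbar b).2 (h h')
  not_le_bar a h := (hbar a).2 (H.symm _ _ (h (H.refl a)))

end LoopGraph

theorem exists_seq_of_reflTransGen {α : Type} {R : α → α → Prop} {p q : α}
    (h : Relation.ReflTransGen R p q) :
    ∃ (k : ℕ) (s : ℕ → α), s 0 = p ∧ s k = q ∧ ∀ i < k, R (s i) (s (i + 1)) := by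
  induction h using Relation.ReflTransGen.head_induction_on with
  | refl => exact ⟨0, fun _ => q, rfl, rfl, fun i hi => absurd hi (Nat.not_lt_zero i)⟩
  | @head a c hac _ ih =>
    obtain ⟨k, s, h0, hk, hs⟩ := ih
    refine ⟨k + 1, fun n => Nat.casesOn n a s, rfl, hk, ?_⟩
    rintro (_ | i) hi
    · simpa [h0] using hac
    · exact hs i (by omega)

/-- Two arcs meet iff one contains the left endpoint of the other. -/
theorem arcs_meet {l₁ r₁ l₂ r₂ : ℝ} (h1 : l₁ ∈ Set.Ico (0 : ℝ) 1) (h2 : l₂ ∈ Set.Ico (0 : ℝ) 1) :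
    (∃ t ∈ Set.Ico (0 : ℝ) 1, arcMem l₁ r₁ t ∧ arcMem l₂ r₂ t) ↔
      arcMem l₁ r₁ l₂ ∨ arcMem l₂ r₂ l₁ := by
  unfold arcMem
  constructor
  · rintro ⟨t, -, ht⟩
    by_contra hn
    simp only [not_or, not_and_or, not_le, not_lt] at hn
    grind
  · rintro (h | h)
    · exact ⟨l₂, h2, h, by grind⟩
    · exact ⟨l₁, h1, by grind, h⟩

namespace LoopGraph

variable {V W : Type}

/-! ### No anchored invertible pair implies circular-arc -/

open Pocset in
/-- The arcs come from the linear order of `exists_lam_of_no_inversion`, scaled to `[0,1)`. A chain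
of moves from `(x, y)` to `(y, x)` anchored at `z` is turned into walks, in which one of the two
vertices rests (on its loop) at each step. -/
theorem circularArc_of_no_anchored {G : LoopGraph V} {H : LoopGraph W} {f : V → W}
    (ht : ∀ u v, ¬ G.TrueTwins u v) (hc : G.IsCircularCompletion H f)
    (hno : ¬ H.HasAnchoredInvertiblePair) : G.IsCircularArc := by
  choose bar' hbar using hc.2.2.2.1
  let P : Pocset W := H.toPocset (fun a b => completion_twin_free ht hc) bar' hbar
  have : Finite W := hc.1
  have hle : ∀ a b : W, a ≤ b ↔ H.nbhd a ⊆ H.nbhd b := fun _ _ => Iff.rfl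
  have hadj : ∀ a b : W, H.Adj a b ↔ ¬ a ≤ bar b := fun a b => (hbar b).adj_iff a
  have hov : ∀ a b : W, H.Overlaps a b ↔ ¬ a ≤ bar b ∧ Inc a b := by
    intro a b; simp only [Overlaps, hadj, hle, Inc]
  have hE : ∀ y x x' : W, AvoidE y x x' → H.AvoidsEdge y x x' := by
    intro y x x' h
    refine ⟨fun h' => (hov _ _).2 ⟨(hadj _ _).1 h', h.1⟩, fun h' => (hov _ _).2 ⟨(hadj _ _).1 h', h.2.1⟩, ?_⟩
    intro h1 h2 h3
    rw [hov] at h1 h2 h3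
    rcases h.2.2.2 with h' | h' | h' | h'
    · exact h3.2.1 h'
    · exact h3.2.2 h'
    · exact h1.1 h'
    · exact h2.1 h'
  have hE0 : ∀ y x : W, Inc y x → H.AvoidsEdge y x x := fun y x h =>
    ⟨fun h' => (hov _ _).2 ⟨(hadj _ _).1 h', h⟩, fun h' => (hov _ _).2 ⟨(hadj _ _).1 h', h⟩,
      fun _ _ h3 => h3.2.1 subset_rfl⟩
  obtain ⟨lam, hinj, hlam⟩ := exists_lam_of_no_inversion (W := W) (by
    intro z x y hxy hxz hyz hpath
    apply hno
    obtain ⟨k, s, h0, hk, hs⟩ := exists_seq_of_reflTransGen hpath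
    have hstep : ∀ i < k, H.Adj (s i).1 (s (i + 1)).1 ∧ H.Adj (s i).2 (s (i + 1)).2 ∧
        H.AvoidsEdge (s i).1 (s i).2 (s (i + 1)).2 ∧
        H.AvoidsEdge (s (i + 1)).2 (s i).1 (s (i + 1)).1 ∧
        H.AvoidsEdge z (s i).1 (s (i + 1)).1 ∧ H.AvoidsEdge z (s i).2 (s (i + 1)).2 := by
      intro i hi
      have h := hs i hi
      generalize s i = p at h
      generalize s (i + 1) = q at h
      cases h with
      | @left x x' y h =>
        exact ⟨(hadj _ _).2 h.1.2.2.1, H.refl _, hE0 _ _ h.1.1.symm, hE _ _ _ h.1, hE _ _ _ h.2.1,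
          hE0 _ _ h.2.2⟩
      | @right x y y' h =>
        exact ⟨H.refl _, (hadj _ _).2 h.1.2.2.1, hE _ _ _ h.1, hE0 _ _ h.1.2.1.symm, hE0 _ _ h.2.2,
          hE _ _ _ h.2.1⟩
    have hne : ∀ {a b : W}, Inc a b → a ≠ b := fun h e => h.1 (e ▸ le_rfl)
    refine ⟨z, x, y, hne hxy, hne hxz, hne hyz, k, fun i => (s i).1, fun i => (s i).2,
      fun i hi => (hstep i hi).1, fun i hi => (hstep i hi).2.1, ?_, ?_, ?_, ?_,
      fun i hi => ⟨(hstep i hi).2.2.1, (hstep i hi).2.2.2.1⟩,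
      ⟨fun i hi => ?_, fun i hi => (hstep i hi).2.2.2.2.1.2.2⟩,
      ⟨fun i hi => ?_, fun i hi => (hstep i hi).2.2.2.2.2.2.2⟩⟩
    · simp only [h0]
    · simp only [hk]
    · simp only [h0]
    · simp only [hk]
    · rcases hi.lt_or_eq with hi | rfl
      · exact (hstep i hi).2.2.2.2.1.1
      · simp only [hk]; exact (hE0 _ _ hyz.symm).1
    · rcases hi.lt_or_eq with hi | rfl
      · exact (hstep i hi).2.2.2.2.2.1
      · simp only [hk]; exact (hE0 _ _ hxz.symm).1)
  obtain ⟨N, hN⟩ := (Set.finite_range lam).bddAbove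
  have hN : ∀ w, lam w ≤ N := fun w => hN ⟨w, rfl⟩
  -- The left endpoint of `v` is `3 * lam (f v) + 2`. Its right endpoint is taken just before the
  -- left endpoint of the partner, at `3 * lam (bar (f v)) + 1`, so that all endpoints differ.
  set M : ℝ := ((3 * N + 3 : ℕ) : ℝ) with hM
  have hMpos : 0 < M := by rw [hM]; positivity
  have hle' : ∀ a b : ℕ, (a : ℝ) / M ≤ (b : ℝ) / M ↔ a ≤ b := fun a b => by
    rw [div_le_div_iff_of_pos_right hMpos, Nat.cast_le]
  have hIco : ∀ a : ℕ, a < 3 * N + 3 → (a : ℝ) / M ∈ Set.Ico (0 : ℝ) 1 := fun a ha =>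
    ⟨by positivity, by rw [div_lt_one hMpos, hM]; exact_mod_cast ha⟩
  have heq : ∀ a b : ℕ, (a : ℝ) / M = (b : ℝ) / M ↔ a = b := fun a b => by
    rw [le_antisymm_iff, hle', hle', le_antisymm_iff]
  have hl : ∀ v, ((3 * lam (f v) + 2 : ℕ) : ℝ) / M ∈ Set.Ico (0 : ℝ) 1 := fun v =>
    hIco _ (by have := hN (f v); omega)
  have hr : ∀ v, ((3 * lam (bar (f v)) + 1 : ℕ) : ℝ) / M ∈ Set.Ico (0 : ℝ) 1 := fun v =>
    hIco _ (by have := hN (bar (f v)); omega)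
  have hmem : ∀ a b : W, arcMem (((3 * lam a + 2 : ℕ) : ℝ) / M) (((3 * lam (bar a) + 1 : ℕ) : ℝ) / M)
      (((3 * lam b + 2 : ℕ) : ℝ) / M) ↔ ArcHits lam a b := by
    intro a b
    simp only [arcMem, ArcHits, ← not_le, hle']
    omega
  refine ⟨fun v => ((3 * lam (f v) + 2 : ℕ) : ℝ) / M, fun v => ((3 * lam (bar (f v)) + 1 : ℕ) : ℝ) / M,
    hl, hr, ?_, fun u v => ?_⟩
  · refine Function.Injective.sumElim ?_ ?_ ?_
    · intro u v h
      have := (heq _ _).1 h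
      exact hc.2.1.1 (hinj (by omega))
    · intro u v h
      have := (heq _ _).1 h
      exact hc.2.1.1 (bar_inj (hinj (by omega)))
    · intro u v h
      have := (heq _ _).1 h
      omega
  · rw [arcs_meet (hl u) (hl v), hmem, hmem, ← hlam, ← hadj]
    exact hc.2.1.2 u v

end LoopGraph


/-! ### Arcs on a finite cyclically ordered set -/

/-- Membership of `t` in the closed arc from `l` to `r`, for the cyclic order of a linear order. -/
def CMem {P : Type} [LinearOrder P] (l r t : P) : Prop :=
  (l ≤ r ∧ l ≤ t ∧ t ≤ r) ∨ (r < l ∧ (l ≤ t ∨ t ≤ r))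

/-- `a`, `b`, `c` are distinct and occur in this cyclic order. -/
def Cyc {P : Type} [LinearOrder P] (a b c : P) : Prop :=
  (a < b ∧ b < c) ∨ (b < c ∧ c < a) ∨ (c < a ∧ a < b)

theorem Cyc.rot {P : Type} [LinearOrder P] {a b c : P} : Cyc a b c ↔ Cyc b c a := by
  unfold Cyc; tauto

/-- Exchanging two of three distinct points reverses their cyclic order. -/
theorem cyc_total {P : Type} [LinearOrder P] {a b c : P} (h1 : a ≠ b) (h2 : a ≠ c) (h3 : b ≠ c) :
    ¬ (Cyc a b c ↔ Cyc a c b) := by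
  unfold Cyc; grind

theorem cyc_congr {P : Type} [LinearOrder P] {p q a b : P} (ha : ¬ CMem p q a) (hb : ¬ CMem p q b) :
    Cyc p a b ↔ Cyc q a b := by
  unfold CMem at ha hb; unfold Cyc; grind

theorem cmem_left {P : Type} [LinearOrder P] (l r : P) : CMem l r l := by
  unfold CMem; grind

theorem cmem_nested {P : Type} [LinearOrder P] (l r r' : P) :
    (∀ t, CMem l r t → CMem l r' t) ∨ (∀ t, CMem l r' t → CMem l r t) := by
  unfold CMem
  by_contra h
  push Not at h
  obtain ⟨⟨s, hs, hs'⟩, ⟨t, ht, ht'⟩⟩ := h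
  grind

theorem cmem_meet {P : Type} [LinearOrder P] {l r l' r' p : P} (h : CMem l r p) (h' : CMem l' r' p) :
    CMem l r l' ∨ CMem l' r' l := by
  unfold CMem at *; grind

theorem cmem_trans {P : Type} [LinearOrder P] {l r m t : P} (h : CMem l r m) (h' : CMem l m t) :
    CMem l r t := by
  unfold CMem at *; grind

theorem cmem_sub {P : Type} [LinearOrder P] {l m a b t : P} (h : CMem l m a) (h' : ¬ CMem a b m)
    (ht : CMem a b t) : CMem l m t := by
  unfold CMem at *; grind

/-- If the arc `[l, r]` lies in `[l', r']` and the arc `[a, b]` is contained in neither and contains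
neither, then the left endpoint `a` is not between `l'` and `l`. The points `s` and `t`
witness the non-inclusions. -/
theorem cmem_nest_out {P : Type} [LinearOrder P] {l r l' r' a b s t : P}
    (hs : CMem a b s) (hs' : ¬ CMem l' r' s) (ht : CMem l r t) (ht' : ¬ CMem a b t)
    (h1 : CMem l' r' l) (h3 : ¬ CMem l r s) (h4 : CMem l' r' t) : ¬ CMem l' l a := by
  intro h
  unfold CMem at *; grind

/-- A nonempty set that does not alternate with its complement is an arc. -/
theorem exists_cmem {P : Type} [LinearOrder P] [Finite P] {S : Set P} (hne : S.Nonempty)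
    (hS : ∀ b d x y, b ∉ S → d ∉ S → x ∈ S → y ∈ S → b < x → x < d → b < y ∧ y < d) :
    ∃ l r, ∀ t, t ∈ S ↔ CMem l r t := by
  by_cases hc : ∀ a ∈ S, ∀ b ∈ S, ∀ t, a ≤ t → t ≤ b → t ∈ S
  · obtain ⟨l, hl, hl'⟩ := Set.exists_min_image S id (Set.toFinite S) hne
    obtain ⟨r, hr, hr'⟩ := Set.exists_max_image S id (Set.toFinite S) hne
    refine ⟨l, r, fun t => ⟨fun ht => .inl ⟨hl' r hr, hl' t ht, hr' t ht⟩, ?_⟩⟩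
    rintro (⟨-, h1, h2⟩ | ⟨h, -⟩)
    · exact hc l hl r hr t h1 h2
    · exact absurd (hl' r hr) (not_le.2 h)
  · push Not at hc
    obtain ⟨a, ha, b, hb, m, ham, hmb, hm⟩ := hc
    have ham' : a < m := ham.lt_of_ne (by rintro rfl; exact hm ha)
    have hmb' : m < b := hmb.lt_of_ne (by rintro rfl; exact hm hb)
    obtain ⟨l, hl, hl'⟩ := Set.exists_min_image {p | p ∈ S ∧ m < p} id (Set.toFinite _) ⟨b, hb, hmb'⟩
    obtain ⟨r, hr, hr'⟩ := Set.exists_max_image {p | p ∈ S ∧ p < m} id (Set.toFinite _) ⟨a, ha, ham'⟩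
    refine ⟨l, r, fun t => ⟨fun ht => .inr ⟨hr.2.trans hl.2, ?_⟩, ?_⟩⟩
    · rcases lt_trichotomy t m with h | h | h
      · exact .inr (hr' t ⟨ht, h⟩)
      · exact absurd ht (h ▸ hm)
      · exact .inl (hl' t ⟨ht, h⟩)
    · have hrl := hr.2.trans hl.2
      rintro (⟨h, -⟩ | ⟨-, h | h⟩)
      · exact absurd h (not_le.2 hrl)
      · by_contra ht
        have hlt : l < t := h.lt_of_ne (by rintro rfl; exact ht hl.1)
        exact (hS m t l a hm ht hl.1 ha hl.2 hlt).1.not_gt ham'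
      · by_contra ht
        have hlt : t < r := h.lt_of_ne (by rintro rfl; exact ht hr.1)
        exact (hS t m r b ht hm hr.1 hb hlt hr.2).2.not_gt hmb'


namespace Pocset

variable {W : Type} [Pocset W]

/-- In an arc model of a pocset, moving `x` to `x'` along an edge avoided by `y` and `z` keeps the
cyclic orientation of the three left endpoints. If `x` and `x'` are comparable the left endpoints
of `y`, `z` are not in the part of the larger arc before the smaller one; if they overlap, both
`y` and `z` are disjoint from one of them and their left endpoints are not between those of `x`
and `x'`. -/
theorem cyc_move {P : Type} [LinearOrder P] (L R : W → P)
    (h1 : ∀ a b : W, a ≤ b → ∀ t, CMem (L a) (R a) t → CMem (L b) (R b) t)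
    (h2 : ∀ a b : W, Inc a b → ∃ t, CMem (L a) (R a) t ∧ ¬ CMem (L b) (R b) t)
    (h3 : ∀ a b : W, a ≤ bar b → ∀ t, CMem (L a) (R a) t → ¬ CMem (L b) (R b) t)
    (h4 : ∀ a b : W, Inc a b → ¬ bar a ≤ b → ¬ a ≤ bar b →
      ∃ t, CMem (L a) (R a) t ∧ CMem (L b) (R b) t)
    {x x' y z : W} (hy : AvoidE y x x') (hz : AvoidE z x x') :
    Cyc (L x) (L y) (L z) ↔ Cyc (L x') (L y) (L z) := by
  have nest : ∀ x x' y : W, x ≤ x' → Inc y x → Inc y x' → ¬ CMem (L x') (L x) (L y) := by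
    intro x x' y hxx hyx hyx'
    obtain ⟨s, hs, hs'⟩ := h2 y x' hyx'
    obtain ⟨t, ht, ht'⟩ := h2 x y hyx.symm
    exact cmem_nest_out hs hs' ht ht' (h1 _ _ hxx _ (cmem_left _ _))
      (fun h => hs' (h1 _ _ hxx _ h)) (h1 _ _ hxx _ ht)
  have hover : ∀ x x' y : W, CMem (L x) (R x) (L x') → Inc y x → (y ≤ bar x ∨ y ≤ bar x') →
      ¬ CMem (L x) (L x') (L y) := by
    intro x x' y hL hyx hd hy
    rcases hd with hd | hd
    · exact h3 _ _ hd _ (cmem_left _ _) (cmem_trans hL hy)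
    · obtain ⟨t, ht, ht'⟩ := h2 y x hyx
      exact ht' (cmem_trans hL (cmem_sub hy (fun h => h3 _ _ hd _ h (cmem_left _ _)) ht))
  by_cases hc : x ≤ x' ∨ x' ≤ x
  · rcases hc with hc | hc
    · exact (cyc_congr (nest _ _ _ hc hy.1 hy.2.1) (nest _ _ _ hc hz.1 hz.2.1)).symm
    · exact cyc_congr (nest _ _ _ hc hy.2.1 hy.1) (nest _ _ _ hc hz.2.1 hz.1)
  · have dy : y ≤ bar x ∨ y ≤ bar x' := by have := hy.2.2.2; tauto
    have dz : z ≤ bar x ∨ z ≤ bar x' := by have := hz.2.2.2; tauto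
    have hinc : Inc x x' := not_or.1 hc
    obtain ⟨t, ht, ht'⟩ := h4 x x' hinc (fun h => by
      rcases dy with dy | dy
      · exact hy.2.1.1 (dy.trans h)
      · exact hy.1.1 (dy.trans (bar_le_comm h))) hy.2.2.1
    rcases cmem_meet ht ht' with h | h
    · exact cyc_congr (hover _ _ _ h hy.1 dy) (hover _ _ _ h hz.1 dz)
    · exact (cyc_congr (hover _ _ _ h hy.2.1 dy.symm) (hover _ _ _ h hz.2.1 dz.symm)).symm

end Pocset

/-- `S` is an arc of the cyclically ordered set `P`, possibly empty or everything: no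
`b, d ∉ S` separate two members `x`, `y` of `S`. The condition is only stated for `b < x < d`. -/
def NoAlt {P : Type} [LinearOrder P] (S : Set P) : Prop :=
  ∀ b d x y, b ∉ S → d ∉ S → x ∈ S → y ∈ S → b < x → x < d → b < y ∧ y < d

theorem NoAlt.compl {P : Type} [LinearOrder P] {S : Set P} (h : NoAlt S) : NoAlt Sᶜ := by
  intro b d x y hb hd hx hy hbx hxd
  simp only [Set.mem_compl_iff, not_not] at *
  constructor
  · by_contra hn
    have hlt : y < b := (not_lt.1 hn).lt_of_ne (by rintro rfl; exact hy hb)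
    exact (h y x b d hy hx hb hd hlt hbx).2.not_gt hxd
  · by_contra hn
    have hlt : d < y := (not_lt.1 hn).lt_of_ne (by rintro rfl; exact hy hd)
    exact (h x y d b hx hy hd hb hxd hlt).1.not_gt hbx

theorem noAlt_arc {P : Type} [LinearOrder P] (l r : P) : NoAlt {t | CMem l r t} := by
  intro b d x y hb hd hx hy h1 h2
  simp only [Set.mem_ofPred_eq, CMem] at *
  grind

theorem NoAlt.cyc {P : Type} [LinearOrder P] {S : Set P} (h : NoAlt S) {b d x y : P} (hb : b ∉ S)
    (hd : d ∉ S) (hx : x ∈ S) (hy : y ∈ S) (h1 : Cyc b x d) (h2 : Cyc d y b) : False := by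
  have e1 := h b d x y hb hd hx hy
  have e2 := h d b y x hd hb hy hx
  have e3 := h.compl x y b d
  have e4 := h.compl y x d b
  simp only [Set.mem_compl_iff, not_not] at e3 e4
  have e3 := e3 hx hy hb hd
  have e4 := e4 hy hx hd hb
  have hxd : x ≠ d := by rintro rfl; exact hd hx
  have hyb : y ≠ b := by rintro rfl; exact hb hy
  unfold Cyc at h1 h2
  grind

/-- The case of `NoAlt.diff` in which `b` is outside both arcs and `d` in both. -/
theorem diff_aux {P : Type} [LinearOrder P] {A B : Set P} (hA : NoAlt A) (hB : NoAlt B)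
    {b d x y q : P} (hqB : q ∈ B) (hqA : q ∉ A) (hbA : b ∉ A) (hbB : b ∉ B) (hdA : d ∈ A)
    (hdB : d ∈ B) (hx : x ∈ A ∧ x ∉ B) (hy : y ∈ A ∧ y ∉ B) (h1 : Cyc b x d) (h2 : Cyc d y b) :
    False := by
  have hqx : q ≠ x := by rintro rfl; exact hqA hx.1
  have hqy : q ≠ y := by rintro rfl; exact hqA hy.1
  have hqb : q ≠ b := by rintro rfl; exact hbB hqB
  have hqd : q ≠ d := by rintro rfl; exact hqA hdA
  -- the arc `B` reaches from `d` to `q` without meeting `x`, `b` or `y`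
  have hq : Cyc x q y := by
    by_contra hn
    exact hB.cyc hx.2 hy.2 hdB hqB (by unfold Cyc at *; grind) (by unfold Cyc at *; grind)
  by_cases hq' : Cyc x q d
  · exact hA.cyc hbA hqA hx.1 hdA (by unfold Cyc at *; grind) (by unfold Cyc at *; grind)
  · exact hA.cyc hbA hqA hdA hy.1 (by unfold Cyc at *; grind) (by unfold Cyc at *; grind)

/-- The difference `A \ B` of arcs is an arc, unless `B ⊆ A`. A point `q` of `B` outside `A` keeps
`B` from lying in the interior of `A`, where it would cut `A` into two pieces. -/
theorem NoAlt.diff {P : Type} [LinearOrder P] {A B : Set P} (hA : NoAlt A) (hB : NoAlt B)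
    (h : ¬ B ⊆ A) : NoAlt (A \ B) := by
  obtain ⟨q, hqB, hqA⟩ := Set.not_subset.1 h
  intro b d x y hb hd hx hy hbx hxd
  simp only [Set.mem_sdiff, not_and_or, not_not] at hb hd hx hy
  have hB' := hB.compl
  by_contra hn
  have hyb : y ≠ b := by rintro rfl; tauto
  have hyd : y ≠ d := by rintro rfl; tauto
  rcases hb with hb | hb <;> rcases hd with hd | hd
  · exact hn (hA b d x y hb hd hx.1 hy.1 hbx hxd)
  · by_cases hdA : d ∈ A
    · by_cases hbB : b ∈ B
      · exact hn (hB' b d x y (not_not.2 hbB) (not_not.2 hd) hx.2 hy.2 hbx hxd)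
      · exact diff_aux hA hB hqB hqA hb hbB hdA hd hx hy (.inl ⟨hbx, hxd⟩) (by unfold Cyc; grind)
    · exact hn (hA b d x y hb hdA hx.1 hy.1 hbx hxd)
  · by_cases hbA : b ∈ A
    · by_cases hdB : d ∈ B
      · exact hn (hB' b d x y (not_not.2 hb) (not_not.2 hdB) hx.2 hy.2 hbx hxd)
      · exact diff_aux hA hB hqB hqA hd hdB hbA hb hy hx (by unfold Cyc; grind) (by unfold Cyc; grind)
    · exact hn (hA b d x y hbA hd hx.1 hy.1 hbx hxd)
  · exact hn (hB' b d x y (not_not.2 hb) (not_not.2 hd) hx.2 hy.2 hbx hxd)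

namespace LoopGraph

variable {V W : Type}

/-! ### Maximal arc models of `G` -/

/-- `G` is the intersection graph of the arcs `S u` of a cyclically ordered set `P`. -/
structure ArcModel (G : LoopGraph V) {P : Type} [LinearOrder P] (S : V → Set P) : Prop where
  noAlt : ∀ u, NoAlt (S u)
  adj : ∀ u v, G.Adj u v ↔ (S u ∩ S v).Nonempty

/-- Every arc may be enlarged by all arcs `S v` with `N[v] ⊆ N[u]`, without new adjacencies. -/
theorem ArcModel.closure {G : LoopGraph V} {P : Type} [LinearOrder P] {S : V → Set P}
    (h : G.ArcModel S) : G.ArcModel fun u => {p | ∃ v, G.nbhd v ⊆ G.nbhd u ∧ p ∈ S v} := by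
  refine ⟨?_, fun u w => ⟨?_, ?_⟩⟩
  · rintro u b d x y hb hd ⟨v, hv, hx⟩ ⟨v', hv', hy⟩ hbx hxd
    have hb' : ∀ v, G.nbhd v ⊆ G.nbhd u → b ∉ S v := fun v hv hbv => hb ⟨v, hv, hbv⟩
    have hd' : ∀ v, G.nbhd v ⊆ G.nbhd u → d ∉ S v := fun v hv hbv => hd ⟨v, hv, hbv⟩
    obtain ⟨p, hp, hp'⟩ := (h.adj u v).1 (hv (G.refl v))
    obtain ⟨p', hq, hq'⟩ := (h.adj u v').1 (hv' (G.refl v'))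
    have e1 := h.noAlt v b d x p (hb' v hv) (hd' v hv) hx hp' hbx hxd
    have e2 := h.noAlt u b d p p' (hb' u subset_rfl) (hd' u subset_rfl) hp hq e1.1 e1.2
    exact h.noAlt v' b d p' y (hb' v' hv') (hd' v' hv') hq' hy e2.1 e2.2
  · intro huw
    obtain ⟨p, hp, hp'⟩ := (h.adj u w).1 huw
    exact ⟨p, ⟨u, subset_rfl, hp⟩, ⟨w, subset_rfl, hp'⟩⟩
  · rintro ⟨p, ⟨v, hv, hp⟩, ⟨v', hv', hp'⟩⟩
    have h1 : G.Adj v v' := (h.adj v v').2 ⟨p, hp, hp'⟩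
    exact G.symm _ _ (hv' (G.symm _ _ (hv h1)))

/-- For a 2-overlap edge `uv`, the arc of `u` may be enlarged to the complement of `S v \ S u`: the
arcs not meeting `S u` belong to non-neighbours of `u`, which are contained in `S v`. -/
theorem ArcModel.fill {G : LoopGraph V} {P : Type} [LinearOrder P] {S : V → Set P}
    (h : G.ArcModel S) (hmono : ∀ u v, G.nbhd u ⊆ G.nbhd v → S u ⊆ S v) {u v : V}
    (huv : G.TwoOverlapEdge u v) :
    ∃ S' : V → Set P, G.ArcModel S' ∧ S ≤ S' ∧ S' u = (S v \ S u)ᶜ := by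
  classical
  have hback : ∀ u v, S u ⊆ S v → G.nbhd u ⊆ G.nbhd v := fun u v hs w hw => by
    obtain ⟨p, hp, hp'⟩ := (h.adj u w).1 hw
    exact (h.adj v w).2 ⟨p, hs hp, hp'⟩
  have hsub : S u ⊆ (S v \ S u)ᶜ := fun p hp hp' => hp'.2 hp
  have key : ∀ w, G.Adj u w ↔ ((S v \ S u)ᶜ ∩ S w).Nonempty := by
    intro w
    constructor
    · intro hw
      obtain ⟨p, hp, hp'⟩ := (h.adj u w).1 hw
      exact ⟨p, hsub hp, hp'⟩
    · rintro ⟨p, hp, hp'⟩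
      by_contra hn
      have hpv : p ∈ S v := hmono _ _ (huv.2.2 w hn) hp'
      have hpu : p ∈ S u := by by_contra hpu; exact hp ⟨hpv, hpu⟩
      exact hn ((h.adj u w).2 ⟨p, hpu, hp'⟩)
  refine ⟨Function.update S u (S v \ S u)ᶜ, ⟨fun w => ?_, fun w w' => ?_⟩, fun w => ?_, by simp⟩
  · by_cases hw : w = u
    · subst hw
      rw [Function.update_self]
      exact ((h.noAlt v).diff (h.noAlt w) fun hs => huv.1.2.1 (hback _ _ hs)).compl
    · rw [Function.update_of_ne hw]; exact h.noAlt w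
  · by_cases hw : w = u <;> by_cases hw' : w' = u
    · rw [hw, hw', Function.update_self]
      obtain ⟨p, hp, -⟩ := (h.adj u u).1 (G.refl u)
      exact iff_of_true (G.refl _) ⟨p, hsub hp, hsub hp⟩
    · subst hw
      rw [Function.update_self, Function.update_of_ne hw']; exact key w'
    · subst hw'
      rw [Function.update_self, Function.update_of_ne hw, Set.inter_comm, adj_comm]; exact key w
    · rw [Function.update_of_ne hw, Function.update_of_ne hw']; exact h.adj w w'
  · by_cases hw : w = u
    · subst hw; rw [Function.update_self]; exact hsub
    · rw [Function.update_of_ne hw]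

/-- A model that is maximal among those on the same points is closed under both enlargements. -/
theorem exists_good_model [Finite V] {G : LoopGraph V} (hG : G.IsCircularArc) :
    ∃ (P : Type) (_ : LinearOrder P) (_ : Finite P) (S : V → Set P), G.ArcModel S ∧
      (∀ u v, G.nbhd u ⊆ G.nbhd v → S u ⊆ S v) ∧
      (∀ u v, G.TwoOverlapEdge u v → S u ∪ S v = Set.univ) := by
  obtain ⟨l, r, hl, -, -, hadj⟩ := hG
  let P := Set.range l ∪ Set.range r
  let L : V → ↥(Set.range l ∪ Set.range r) := fun v => ⟨l v, .inl ⟨v, rfl⟩⟩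
  let R : V → ↥(Set.range l ∪ Set.range r) := fun v => ⟨r v, .inr ⟨v, rfl⟩⟩
  have hcm : ∀ u w, arcMem (l u) (r u) (l w) ↔ CMem (L u) (R u) (L w) := fun u w => Iff.rfl
  have hmodel : G.ArcModel fun u => {t | CMem (L u) (R u) t} := by
    refine ⟨fun u => noAlt_arc _ _, fun u v => ?_⟩
    rw [hadj, arcs_meet (hl u) (hl v), hcm, hcm]
    constructor
    · rintro (h | h)
      · exact ⟨L v, h, cmem_left _ _⟩
      · exact ⟨L u, cmem_left _ _, h⟩
    · rintro ⟨p, hp, hp'⟩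
      exact cmem_meet hp hp'
  have hfin : Finite ↥(Set.range l ∪ Set.range r) :=
    ((Set.finite_range l).union (Set.finite_range r)).to_subtype
  obtain ⟨S, hS, hmax⟩ := (Set.toFinite {S : V → Set ↥(Set.range l ∪ Set.range r) | G.ArcModel S}).exists_maximal ⟨_, hmodel⟩
  have hmono : ∀ u v, G.nbhd u ⊆ G.nbhd v → S u ⊆ S v := by
    intro u v huv p hp
    exact hmax (y := fun u => {p | ∃ v, G.nbhd v ⊆ G.nbhd u ∧ p ∈ S v}) (ArcModel.closure hS)
      (fun u p hp => ⟨u, subset_rfl, hp⟩) v ⟨u, huv, hp⟩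
  refine ⟨_, inferInstance, hfin, S, hS, hmono, fun u v huv => ?_⟩
  obtain ⟨S', h1, h2, h3⟩ := ArcModel.fill hS hmono huv
  have h4 := hmax h1 h2 u
  rw [h3] at h4
  ext p
  simp only [Set.mem_union, Set.mem_univ, iff_true]
  by_contra hn
  rw [not_or] at hn
  exact hn.1 (h4 fun h => hn.2 h.1)

/-! ### Circular-arc implies no anchored invertible pair -/

open Pocset in
/-- The arcs `S u` and the complements of arcs form an arc model of the whole completion, in which
the cyclic orientation of left endpoints is an invariant of anchored moves. -/
theorem no_anchored_of_circularArc [Finite V] {G : LoopGraph V} {H : LoopGraph W} {f : V → W}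
    (hu : ∀ u, ¬ G.Universal u) (ht : ∀ u v, ¬ G.TrueTwins u v)
    (hc : G.IsCircularCompletion H f) (hG : G.IsCircularArc) : ¬ H.HasAnchoredInvertiblePair := by
  obtain ⟨P, _, _, S, hS, hmono, hcover⟩ := exists_good_model hG
  choose bar' hbar using hc.2.2.2.1
  have hgood := exists_partner hc bar' hbar
  let _ : Pocset W := H.toPocset (fun a b => completion_twin_free ht hc) bar' hbar
  have hle : ∀ a b : W, a ≤ b ↔ H.nbhd a ⊆ H.nbhd b := fun _ _ => Iff.rfl
  have hadj : ∀ a b : W, H.Adj a b ↔ ¬ a ≤ bar b := fun a b => (hbar b).adj_iff a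
  have hnadj : ∀ a b : W, a ≤ bar b ↔ ¬ H.Adj a b := fun a b => by rw [hadj, not_not]
  have hov : ∀ a b : W, H.Overlaps a b ↔ ¬ a ≤ bar b ∧ Inc a b := by
    intro a b; simp only [Overlaps, hadj, hle, Inc]
  have hspan : ∀ a b : W, H.SpanningPair a b ↔ bar a ≤ b := by
    intro a b
    constructor
    · intro h
      exact h.2 _ (hbar a).2
    · intro h
      refine ⟨fun x hx => ?_, fun x hx => ?_⟩
      · exact ((hnadj x b).2 fun h => hx (H.symm _ _ h)).trans (bar_le_comm h)
      · exact ((hnadj x a).2 fun h => hx (H.symm _ _ h)).trans h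
  -- translation to the sets `S u`
  have s1 : ∀ u v, S u ⊆ S v ↔ f u ≤ f v := by
    intro u v
    constructor
    · intro hs
      have hN : G.nbhd u ⊆ G.nbhd v := fun w hw => by
        obtain ⟨p, hp, hp'⟩ := (hS.adj u w).1 hw
        exact (hS.adj v w).2 ⟨p, hs hp, hp'⟩
      have hA : G.Adj u v := G.symm _ _ (hN (G.refl u))
      rcases ((hc.2.2.1 u v hA).1.1 ⟨hA, .inl hN⟩).2 with h | h
      · exact h
      · have hN' := nbhd_subset_of_emb hc.2.1 h
        by_cases huv : u = v
        · rw [huv]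
        · exact absurd ⟨huv, hN.antisymm hN'⟩ (ht u v)
    · exact fun h => hmono _ _ (nbhd_subset_of_emb hc.2.1 h)
  have s2 : ∀ u v, (∀ p, p ∈ S u → p ∉ S v) ↔ f u ≤ bar (f v) := by
    intro u v
    rw [hnadj, ← hc.2.1.2, hS.adj]
    exact ⟨fun h ⟨p, hp, hp'⟩ => h p hp hp', fun h p hpu hpv => h ⟨p, hpu, hpv⟩⟩
  -- a spanning edge is a 2-overlap edge, since there are no universal vertices
  have htwo : ∀ u v, G.Adj u v → G.SpanningPair u v → G.TwoOverlapEdge u v := by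
    intro u v hA hs
    refine ⟨⟨hA, fun h => hu v fun x => ?_, fun h => hu u fun x => ?_⟩, hs⟩
    · by_contra hx
      exact hx (h (hs.1 x hx (G.refl x)))
    · by_contra hx
      exact hx (h (hs.2 x hx (G.refl x)))
  have s3 : ∀ u v, G.Adj u v → ((∀ p, p ∈ S u ∨ p ∈ S v) ↔ bar (f u) ≤ f v) := by
    intro u v hA
    constructor
    · intro hcov
      have hs : G.SpanningPair u v := by
        have key : ∀ u v, (∀ p, p ∈ S u ∨ p ∈ S v) → ∀ x, ¬ G.Adj v x → G.nbhd x ⊆ G.nbhd u := by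
          intro u v hcov x hx
          have : S x ⊆ S u := fun p hp =>
            (hcov p).resolve_right fun hp' => hx ((hS.adj v x).2 ⟨p, hp', hp⟩)
          exact nbhd_subset_of_emb hc.2.1 ((s1 x u).1 this)
        exact ⟨key u v hcov, key v u fun p => (hcov p).symm⟩
      exact (hspan _ _).1 ((hc.2.2.1 u v hA).2.2.1 (htwo u v hA hs)).2
    · intro h p
      have := hcover u v (htwo u v hA (spanning_of_emb hc.2.1 ((hspan _ _).2 h)))
      exact (this ▸ Set.mem_univ p : p ∈ S u ∪ S v)
  have hne : ∀ u, (S u).Nonempty := fun u => by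
    obtain ⟨p, hp, -⟩ := (hS.adj u u).1 (G.refl u)
    exact ⟨p, hp⟩
  have hne' : ∀ u, (S u)ᶜ.Nonempty := fun u => by
    rw [Set.nonempty_compl]
    intro h
    refine hu u fun v => (hS.adj u v).2 ?_
    rw [h, Set.univ_inter]; exact hne v
  -- an arc for every vertex of `H`: that of `G`, or the complement of the arc of the partner
  have hT : ∀ w, ∃ l r : P, (∃ u, f u = w ∧ ∀ t, CMem l r t ↔ t ∈ S u) ∨
      (∃ u, bar (f u) = w ∧ (∀ v, ¬ H.CircularPair (f u) (f v)) ∧ ∀ t, CMem l r t ↔ t ∉ S u) := by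
    intro w
    by_cases hw : w ∈ Set.range f
    · obtain ⟨u, rfl⟩ := hw
      obtain ⟨l, r, h⟩ := exists_cmem (hne u) (hS.noAlt u)
      exact ⟨l, r, .inl ⟨u, rfl, fun t => (h t).symm⟩⟩
    · obtain ⟨u, hu1, hu2⟩ := hgood w hw
      obtain ⟨l, r, h⟩ := exists_cmem (hne' u) (hS.noAlt u).compl
      exact ⟨l, r, .inr ⟨u, hu1, hu2, fun t => (h t).symm⟩⟩
  choose L R hLR using hT
  have hgoodadj : ∀ u v, (∀ v, ¬ H.CircularPair (f u) (f v)) → bar (f u) ≤ f v → G.Adj u v := by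
    intro u v h hs
    by_contra hA
    exact h v ⟨(hspan _ _).2 hs, fun hadj_f => hA ((hc.2.1.2 u v).2 hadj_f)⟩
  -- containment, disjointness and intersection of the arcs follow the pocset `W`
  have h1 : ∀ a b : W, a ≤ b → ∀ t, CMem (L a) (R a) t → CMem (L b) (R b) t := by
    intro a b hab t
    rcases hLR a with ⟨u, rfl, hu⟩ | ⟨u, rfl, hug, hu⟩ <;>
      rcases hLR b with ⟨v, rfl, hv⟩ | ⟨v, rfl, hvg, hv⟩ <;> rw [hu, hv]
    · exact fun h => (s1 u v).2 hab h
    · exact (s2 u v).2 hab t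
    · exact ((s3 u v (hgoodadj u v hug hab)).2 hab t).resolve_left
    · exact fun h h' => h ((s1 v u).2 (bar_bar (f u) ▸ bar_bar (f v) ▸ bar_le _ _ hab) h')
  have h2 : ∀ a b : W, Inc a b → ∃ t, CMem (L a) (R a) t ∧ ¬ CMem (L b) (R b) t := by
    intro a b hab
    by_contra hn
    push Not at hn
    rcases hLR a with ⟨u, rfl, hu⟩ | ⟨u, rfl, hug, hu⟩ <;>
      rcases hLR b with ⟨v, rfl, hv⟩ | ⟨v, rfl, hvg, hv⟩ <;> simp only [hu, hv] at hn
    · exact hab.1 ((s1 u v).1 hn)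
    · exact hab.1 ((s2 u v).1 hn)
    · by_cases hA : G.Adj u v
      · exact hab.1 ((s3 u v hA).1 fun p => or_iff_not_imp_left.2 (hn p))
      · exact hab.2 (le_bar_comm ((hnadj _ _).2 fun h => hA ((hc.2.1.2 u v).2 h)))
    · exact hab.1 (bar_le _ _ ((s1 v u).1 fun p hp => by_contra fun h => hn p h hp))
  have h3 : ∀ a b : W, a ≤ bar b → ∀ t, CMem (L a) (R a) t → ¬ CMem (L b) (R b) t := by
    intro a b hab t
    rcases hLR a with ⟨u, rfl, hu⟩ | ⟨u, rfl, hug, hu⟩ <;>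
      rcases hLR b with ⟨v, rfl, hv⟩ | ⟨v, rfl, hvg, hv⟩ <;> rw [hu, hv]
    · exact (s2 u v).2 hab t
    · rw [bar_bar] at hab
      exact fun h h' => h' ((s1 u v).2 hab h)
    · exact fun h h' => h ((s1 v u).2 (bar_bar (f u) ▸ bar_bar (f v) ▸ bar_le _ _ hab) h')
    · rw [bar_bar] at hab
      have := (s3 u v (hgoodadj u v hug hab)).2 hab t
      tauto
  have h4 : ∀ a b : W, Inc a b → ¬ bar a ≤ b → ¬ a ≤ bar b →
      ∃ t, CMem (L a) (R a) t ∧ CMem (L b) (R b) t := by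
    intro a b hab hsp had
    by_contra hn
    push Not at hn
    rcases hLR a with ⟨u, rfl, hu⟩ | ⟨u, rfl, hug, hu⟩ <;>
      rcases hLR b with ⟨v, rfl, hv⟩ | ⟨v, rfl, hvg, hv⟩ <;> simp only [hu, hv, not_not] at hn
    · exact had ((s2 u v).1 hn)
    · exact had ((bar_bar (f v)).symm ▸ (s1 u v).1 hn)
    · exact had (bar_le _ _ ((s1 v u).1 fun p hp => by_contra fun h => hn p h hp))
    · by_cases hA : G.Adj u v
      · exact had ((bar_bar (f v)).symm ▸ (s3 u v hA).1 fun p => or_iff_not_imp_left.2 (hn p))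
      · rw [bar_bar] at hsp
        exact hsp ((hnadj _ _).2 fun h => hA ((hc.2.1.2 u v).2 h))
  have hmove : ∀ {x x' y z : W}, AvoidE y x x' → AvoidE z x x' →
      (Cyc (L x) (L y) (L z) ↔ Cyc (L x') (L y) (L z)) := cyc_move L R h1 h2 h3 h4
  have hLne : ∀ a b, Inc a b → L a ≠ L b := by
    intro a b hab he
    obtain ⟨s, hs, hs'⟩ := h2 a b hab
    obtain ⟨t, ht, ht'⟩ := h2 b a hab.symm
    rw [he] at hs ht'
    rcases cmem_nested (L b) (R a) (R b) with h | h
    · exact hs' (h _ hs)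
    · exact ht' (h _ ht)
  have hInc : ∀ a b : W, (H.Adj a b → H.Overlaps a b) → Inc a b := by
    intro a b h
    by_cases hA : H.Adj a b
    · exact ((hov a b).1 (h hA)).2
    · exact inc_of_le_bar ((hnadj a b).2 hA)
  have hE : ∀ y x x' : W, H.Adj x x' → H.AvoidsEdge y x x' → AvoidE y x x' := by
    intro y x x' hxx h
    have i1 := hInc _ _ h.1
    have i2 := hInc _ _ h.2.1
    refine ⟨i1, i2, (hadj _ _).1 hxx, ?_⟩
    by_contra hn
    push Not at hn
    exact h.2.2 ((hov _ _).2 ⟨hn.2.2.1, i1⟩) ((hov _ _).2 ⟨hn.2.2.2, i2⟩)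
      ((hov _ _).2 ⟨(hadj _ _).1 hxx, hn.1, hn.2.1⟩)
  rintro ⟨z, x, y, hxy, -, -, k, Pw, Qw, hP, hQ, hP0, hPk, hQ0, hQk, hPQ, hzP, hzQ⟩
  -- one step of both walks moves the second point first, and then the first one
  have hinv : ∀ i ≤ k, (Cyc (L x) (L y) (L z) ↔ Cyc (L (Pw i)) (L (Qw i)) (L z)) := by
    intro i
    induction i with
    | zero => intro _; rw [hP0, hQ0]
    | succ i ih =>
      intro hi
      obtain ⟨a1, a2⟩ := hPQ i hi
      have m1 := hE _ _ _ (hQ i hi) a1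
      have m2 := hE _ _ _ (hP i hi) a2
      have m3 := hE z _ _ (hQ i hi) ⟨hzQ.1 i (by omega), hzQ.1 (i + 1) hi, hzQ.2 i hi⟩
      have m4 := hE z _ _ (hP i hi) ⟨hzP.1 i (by omega), hzP.1 (i + 1) hi, hzP.2 i hi⟩
      rw [ih (by omega), Cyc.rot, hmove m3 m1, ← Cyc.rot, hmove m2 m4]
  have hk : 0 < k := Nat.pos_of_ne_zero (by rintro rfl; exact hxy (hP0.symm.trans hPk))
  have c1 : Inc x y := by
    have := hInc _ _ (hPQ 0 hk).1.1
    rwa [hP0, hQ0] at this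
  have c2 : Inc z x := by
    have := hInc _ _ (hzP.1 0 (by omega))
    rwa [hP0] at this
  have c3 : Inc z y := by
    have := hInc _ _ (hzQ.1 0 (by omega))
    rwa [hQ0] at this
  have hfinal := hinv k le_rfl
  rw [hPk, hQk, ← Cyc.rot, ← Cyc.rot (a := L z)] at hfinal
  exact cyc_total (hLne _ _ c2) (hLne _ _ c3) (hLne _ _ c1) hfinal

end LoopGraph

/-- Let `G` be a finite graph (with loops) having no universal vertices and
no true twins. Then `G` is a circular-arc graph iff a circular completion of `G`
contains no anchored invertible pair. -/
theorem circularArc_iff_completion_no_anchored_invertible_pair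
    {V W : Type} [Fintype V] (G : LoopGraph V)
    (hu : ∀ u, ¬ G.Universal u) (ht : ∀ u v, ¬ G.TrueTwins u v)
    (H : LoopGraph W) (f : V → W) (hcomp : G.IsCircularCompletion H f) :
    G.IsCircularArc ↔ ¬ H.HasAnchoredInvertiblePair := by
  have : Finite V := inferInstance
  exact ⟨LoopGraph.no_anchored_of_circularArc hu ht hcomp, LoopGraph.circularArc_of_no_anchored ht hcomp⟩
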